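/- Let N > 5, and suppose R_N is tiled by triangles all similar to a triangle whose angles α, β, γ are rational multiples of π. If the equation at every vertex V_j of R_N is α = δ_N (that is, exactly one tile meets each vertex of R_N, with its angle α = (N−2)π/N there), then β = γ = π/N. -/

import Mathlib

/-!
A Galois-conjugation argument on areas. Let `M` be a multiple of `2N` for which `Mβ` and `Mγ` (hence
also `Mα`) are integral multiples of `π`, and let `k` be prime to `M`. The automorphism `ζ ↦ ζ ^ k` of
the `M`-th cyclotomic field extends to an additive map `F : ℂ → ℂ` commuting with conjugation and
semilinear over the `M`-th roots of unity (`exists_conj`).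

Applying `F` to the vertices of a dissection preserves relations between areas. In general the vertices
of the tiles do not have cyclotomic coordinates and tiles need not meet edge to edge; both problems
disappear in the following form. Integrating `Q (x + l * conj x)`, with `Q` the second derivative of
a polynomial `P`, over a triangle gives a sum over the
oriented edges of terms depending only on an end point and on the direction of the edge
(`integral_tri_poly`). Letting `P` and `l` vary shows that if two families of triangles cover the same
region, then for every function of a point and a direction the differences along the oriented edges have
the same sum over both families (`edge_sum_eq_zero`). The function `edgeFn` keeps the edges whose
direction is an `M`-th root of unity and yields the signed area conjugated by `F`. The identity is applied
to the given tiling and to the decomposition of the `N`-gon into `N` triangles from its center.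

The triangles at the center contribute `N sin (2πk/N)`. In a tile either no edge or every edge has a
direction which is an `M`-th root of unity, and in the second case the conjugate of the tile has line
angles `kα`, `kβ`, `kγ`; hence its contribution is zero or has the sign of `sin kα sin kβ sin kγ`
(`tile_sign`). So `sin (2πk/N) sin kα sin kβ sin kγ ≥ 0`. Since `α = π - 2π/N` and `k` is odd,
`sin kα = sin (2πk/N) ≠ 0`, and it follows that `sin kβ sin kγ ≥ 0`, that is,
`cos (2πk/N) ≤ cos (k(β - γ))` for all such `M` and `k`.

With `e = (β - γ)/(2π)` one has `|e| < 1/N`, and a suitable choice of `k` contradicts this inequality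
unless `e = 0` (`eq_zero_of_cos_le`).
-/

open Real EuclideanGeometry

noncomputable section

/-- The Euclidean plane. -/
abbrev Pt : Type := EuclideanSpace ℝ (Fin 2)

/-- The `j`-th vertex of the regular `N`-gon inscribed in the unit circle. -/
noncomputable def ngonVertex (N : ℕ) (j : ℕ) : Pt :=
  (WithLp.equiv 2 (Fin 2 → ℝ)).symm ![Real.cos (2 * π * j / N), Real.sin (2 * π * j / N)]

/-- The regular `N`-gon `R_N`. -/
noncomputable def ngon (N : ℕ) : Set Pt :=
  convexHull ℝ (Set.range fun j : Fin N => ngonVertex N j)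

/-- The interior angle `δ_N = (N-2)π/N` of the regular `N`-gon. -/
noncomputable def ngonAngle (N : ℕ) : ℝ := ((N : ℝ) - 2) * π / N

/-- The closed triangular region spanned by the three points `T 0, T 1, T 2`. -/
noncomputable def triRegion (T : Fin 3 → Pt) : Set Pt :=
  convexHull ℝ (Set.range T)

/-- The angle of the triangle `T` at its `i`-th vertex. -/
noncomputable def angleAt (T : Fin 3 → Pt) (i : Fin 3) : ℝ :=
  EuclideanGeometry.angle (T (i + 1)) (T i) (T (i + 2))

/-- `T` is a tiling of the regular `N`-gon by finitely many nondegenerate triangles: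
the tiles have pairwise disjoint interiors and their union is `R_N`. -/
def IsTiling (N : ℕ) {m : ℕ} (T : Fin m → Fin 3 → Pt) : Prop :=
  (∀ t, AffineIndependent ℝ (T t)) ∧
  (Pairwise fun t s => Disjoint (interior (triRegion (T t))) (interior (triRegion (T s)))) ∧
  (⋃ t, triRegion (T t)) = ngon N

/-- The triangle `T` has angles `α, β, γ` at its vertices `0, 1, 2` (a labeling of its
vertices by the three angles). -/
def HasAngles (T : Fin 3 → Pt) (α β γ : ℝ) : Prop :=
  angleAt T 0 = α ∧ angleAt T 1 = β ∧ angleAt T 2 = γ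

/-- The triangle `T` is similar to a triangle with angles `α, β, γ`:
its angles are `α, β, γ` in some order (sizes and orientation are unrestricted). -/
def SimilarTo (T : Fin 3 → Pt) (α β γ : ℝ) : Prop :=
  ∃ σ : Equiv.Perm (Fin 3), HasAngles (fun i => T (σ i)) α β γ

/-- The number of tiles of the (labeled) tiling `T` whose vertex labeled `i`
lies at the point `V`. -/
noncomputable def countAt {m : ℕ} (T : Fin m → Fin 3 → Pt) (i : Fin 3) (V : Pt) : ℕ :=
  Nat.card {t : Fin m // T t i = V}

/-- The tiling `T`, by triangles similar to the triangle with angles `α, β, γ`, is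
regular: one can label the vertices of each tile by the angles `α, β, γ` of the tile
at those vertices so that, for two of the labels, at every point of the plane the
number of tiles having their vertex carrying the first label at that point equals the
number of tiles having their vertex carrying the second label there. -/
def IsRegularTiling {m : ℕ} (T : Fin m → Fin 3 → Pt) (α β γ : ℝ) : Prop :=
  ∃ L : Fin m → Equiv.Perm (Fin 3),
    (∀ t, HasAngles (fun i => T t (L t i)) α β γ) ∧
    ∃ i j : Fin 3, i ≠ j ∧
      ∀ V : Pt, countAt (fun t i' => T t (L t i')) i V
              = countAt (fun t i' => T t (L t i')) j V

section

open MeasureTheory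

/-! ### Conjugation maps and a separation lemma -/

/-- The automorphism `ζ ↦ ζ ^ k` of the `M`-th cyclotomic field `L` extends to an additive map
`ℂ → ℂ` that is semilinear over `L` and commutes with complex conjugation. -/
lemma exists_semilinear (M k : ℕ) (hM : 0 < M) (hk : k.Coprime M) :
    ∃ F : ℂ →+ ℂ, (∀ z, F (Complex.exp (2 * π * Complex.I / M) * z)
        = Complex.exp (2 * π * Complex.I / M) ^ k * F z) ∧ F 1 = 1 ∧
      ∀ z, F ((starRingEnd ℂ) z) = (starRingEnd ℂ) (F z) := by
  set ζ : ℂ := Complex.exp (2 * π * Complex.I / M) with hζ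
  have hprim : IsPrimitiveRoot ζ M := Complex.isPrimitiveRoot_exp M hM.ne'
  have hint : IsIntegral ℚ ζ := (hprim.isIntegral hM).tower_top
  have hroot : Polynomial.aeval (ζ ^ k) (minpoly ℚ ζ) = 0 := by
    have h1 := Polynomial.cyclotomic_eq_minpoly_rat hprim hM
    have h2 := Polynomial.cyclotomic_eq_minpoly_rat (hprim.pow_of_coprime k hk) hM
    rw [← h1, h2]; exact minpoly.aeval _ _
  set L := IntermediateField.adjoin ℚ ({ζ} : Set ℂ) with hL
  let g : L := IntermediateField.AdjoinSimple.gen ℚ ζ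
  have hg : (g : ℂ) = ζ := IntermediateField.AdjoinSimple.coe_gen ℚ ζ
  obtain ⟨σ, hσ⟩ : ∃ σ : L →ₐ[ℚ] ℂ, σ g = ζ ^ k := by
    let pb := IntermediateField.adjoin.powerBasis hint
    refine ⟨pb.lift (ζ ^ k) ?_, ?_⟩
    · rw [IntermediateField.adjoin.powerBasis_gen, IntermediateField.minpoly_gen]; exact hroot
    · have hgen : pb.gen = g := IntermediateField.adjoin.powerBasis_gen hint
      rw [← hgen]; exact pb.lift_gen _ _
  -- `f` is an `L`-linear projection of `ℂ` onto the cyclotomic field `L`.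
  obtain ⟨f, hf⟩ := LinearMap.exists_leftInverse_of_injective (Algebra.linearMap L ℂ)
    (LinearMap.ker_eq_bot.2 (algebraMap L ℂ).injective)
  have hf1 : f 1 = 1 := by
    have := LinearMap.congr_fun hf 1
    simpa using this
  have hfg : ∀ z, f (ζ * z) = g * f z := by
    intro z
    have : ζ * z = g • z := by rw [← hg]; rfl
    rw [this, map_smul]; rfl
  have hnz : ζ ≠ 0 := Complex.exp_ne_zero _
  have hgnz : g ≠ 0 := by
    intro h; apply hnz; rw [← hg, h]; rfl
  have hfg' : ∀ z, f (ζ⁻¹ * z) = g⁻¹ * f z := by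
    intro z
    have := hfg (ζ⁻¹ * z)
    rw [mul_inv_cancel_left₀ hnz] at this
    rw [this, inv_mul_cancel_left₀ hgnz]
  have hconj : (starRingEnd ℂ) ζ = ζ⁻¹ := by
    rw [Complex.inv_def, Complex.normSq_eq_norm_sq, hprim.norm'_eq_one hM.ne']; simp
  let F0 : ℂ →+ ℂ := (σ : L →+ ℂ).comp f.toAddMonoidHom
  have hF0 : ∀ z, F0 z = σ (f z) := fun z => rfl
  -- Averaging `F0` with its conjugate makes the map commute with conjugation; semilinearity survives
  -- because conjugation sends `ζ` to `ζ⁻¹`.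
  refine ⟨{ toFun := fun z => (F0 z + (starRingEnd ℂ) (F0 ((starRingEnd ℂ) z))) / 2
            map_zero' := by simp
            map_add' := fun x y => by simp only [map_add]; ring }, ?_, ?_, ?_⟩
  · intro z
    simp only [AddMonoidHom.coe_mk, ZeroHom.coe_mk, map_mul, hconj, hF0, hfg, hfg', hσ, map_inv₀,
      map_pow, inv_inv, inv_pow]
    ring
  · simp [hF0, hf1]
  · intro z
    simp only [AddMonoidHom.coe_mk, ZeroHom.coe_mk, map_div₀, map_add, Complex.conj_conj, map_ofNat]
    ring

/-- If a finite combination of the functions `l ↦ P (v + l * conj v) / (τ + l)` vanishes on the unit disc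
for every polynomial `P`, then the underlying formal combination of the pairs `(v, τ)` is zero, so every
function `H` of `(v, τ)` sums to zero with the same coefficients. -/
lemma sum_eq_zero_of_forall_eval {J : Type*} [Fintype J] (v τ s : J → ℂ) (hτ : ∀ j, ‖τ j‖ = 1)
    (h : ∀ l : ℂ, ‖l‖ < 1 → ∀ P : Polynomial ℂ,
      ∑ j, s j * (P.eval (v j + l * (starRingEnd ℂ) (v j)) / (τ j + l)) = 0)
    (H : ℂ → ℂ → ℂ) : ∑ j, s j * H (v j) (τ j) = 0 := by
  classical
  -- `P` is chosen to vanish at all the points `v + l * conj v` except the one with `v = v0`;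
  -- these points are distinct for distinct `v` because `‖l‖ < 1`.
  have h1 : ∀ v0 : ℂ, ∀ l : ℂ, ‖l‖ < 1 → ∑ j with v j = v0, s j / (τ j + l) = 0 := by
    intro v0 l hl
    set ℓ : ℂ → ℂ := fun w => w + l * (starRingEnd ℂ) w with hℓ
    have hinj : Function.Injective ℓ := by
      intro a b hab
      have h0 : (a - b) = - (l * (starRingEnd ℂ) (a - b)) := by
        simp only [hℓ] at hab
        rw [map_sub]; linear_combination hab
      have h2 : ‖a - b‖ = ‖l‖ * ‖a - b‖ := by
        conv_lhs => rw [h0]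
        rw [norm_neg, norm_mul, RCLike.norm_conj]
      by_contra hne
      have : 0 < ‖a - b‖ := norm_pos_iff.2 (sub_ne_zero.2 hne)
      nlinarith
    set S : Finset ℂ := (Finset.univ.image v).erase v0 with hS
    set P : Polynomial ℂ := ∏ w ∈ S, (Polynomial.X - Polynomial.C (ℓ w)) with hP
    have hPe : ∀ x, P.eval x = ∏ w ∈ S, (x - ℓ w) := by
      intro x; rw [hP, Polynomial.eval_prod]; simp
    have hP0 : P.eval (ℓ v0) ≠ 0 := by
      rw [hPe, Finset.prod_ne_zero_iff]
      intro w hw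
      rw [sub_ne_zero]
      intro he
      exact (Finset.ne_of_mem_erase hw) (hinj he).symm
    have hPz : ∀ j, v j ≠ v0 → P.eval (ℓ (v j)) = 0 := by
      intro j hj
      rw [hPe]
      exact Finset.prod_eq_zero (i := v j) (by simp [hS, hj]) (sub_self _)
    have hmain := h l hl P
    have : ∑ j, s j * (P.eval (ℓ (v j)) / (τ j + l))
        = P.eval (ℓ v0) * ∑ j with v j = v0, s j / (τ j + l) := by
      rw [Finset.mul_sum, Finset.sum_filter]
      refine Finset.sum_congr rfl fun j _ => ?_
      split_ifs with hj
      · rw [hj]; ring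
      · rw [hPz j hj]; simp
    rw [this] at hmain
    exact (mul_eq_zero.1 hmain).resolve_left hP0
  -- The residue at the pole `l = -t0`, computed as a radial limit from inside the unit disc.
  have h2 : ∀ v0 t0 : ℂ, ∑ j with (v j = v0 ∧ τ j = t0), s j = 0 := by
    intro v0 t0
    by_cases ht0 : ‖t0‖ = 1
    swap
    · rw [Finset.filter_false_of_mem]; · simp
      rintro j - ⟨-, hj⟩
      exact ht0 (hj ▸ hτ j)
    have ht0' : t0 ≠ 0 := by intro h; simp [h] at ht0
    have hlim : Filter.Tendsto (fun x : ℝ => ∑ j with v j = v0,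
        s j * ((1 - x) * t0 / (τ j - x * t0))) (nhdsWithin 1 (Set.Ioo 0 1))
        (nhds (∑ j with v j = v0, s j * (if τ j = t0 then 1 else 0))) := by
      refine tendsto_finsetSum _ fun j _ => Filter.Tendsto.const_mul _ ?_
      split_ifs with hj
      · refine (tendsto_const_nhds).congr' ?_
        filter_upwards [self_mem_nhdsWithin] with x hx
        rw [hj]
        have : (1 - (x:ℂ)) ≠ 0 := by
          rw [sub_ne_zero]; exact_mod_cast hx.2.ne'
        have e : t0 - x * t0 = (1 - x) * t0 := by ring
        rw [e, div_self (mul_ne_zero this ht0')]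
      · have hne : τ j - (1:ℝ) * t0 ≠ 0 := by
          simpa [sub_eq_zero] using hj
        have : ContinuousAt (fun x : ℝ => (1 - (x:ℂ)) * t0 / (τ j - x * t0)) 1 := by
          apply ContinuousAt.div
          · fun_prop
          · fun_prop
          · exact hne
        have h3 := this.tendsto.mono_left (nhdsWithin_le_nhds (s := Set.Ioo 0 1))
        simpa using h3
    have hzero : (fun x : ℝ => ∑ j with v j = v0,
        s j * ((1 - x) * t0 / (τ j - x * t0))) =ᶠ[nhdsWithin 1 (Set.Ioo 0 1)] fun _ => 0 := by
      filter_upwards [self_mem_nhdsWithin] with x hx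
      have := h1 v0 (-(x * t0)) (by
        rw [norm_neg, norm_mul, ht0, mul_one, Complex.norm_real, Real.norm_eq_abs,
          abs_of_pos hx.1]; exact hx.2)
      rw [← mul_zero ((1 - (x:ℂ)) * t0), ← this, Finset.mul_sum]
      refine Finset.sum_congr rfl fun j _ => ?_
      rw [← sub_eq_add_neg]; ring
    have : (nhdsWithin (1:ℝ) (Set.Ioo 0 1)).NeBot := right_nhdsWithin_Ioo_neBot (by norm_num)
    have := tendsto_nhds_unique hlim ((tendsto_const_nhds).congr' hzero.symm)
    rw [← this, ← Finset.filter_filter, Finset.sum_filter]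
    exact Finset.sum_congr rfl fun j _ => by split_ifs <;> simp
  rw [← Finset.sum_fiberwise_of_maps_to (s := Finset.univ)
    (t := Finset.univ.image fun j => (v j, τ j)) (g := fun j => (v j, τ j))
    (fun j _ => Finset.mem_image_of_mem _ (Finset.mem_univ j))]
  refine Finset.sum_eq_zero fun q _ => ?_
  have := h2 q.1 q.2
  rw [← zero_mul (H q.1 q.2), ← this, Finset.sum_mul]
  refine Finset.sum_congr ?_ ?_
  · ext j; simp [Prod.ext_iff]
  · intro j hj
    simp only [Finset.mem_filter, Finset.mem_univ, true_and] at hj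
    rw [hj.1, hj.2]

/-! ### Integrals over triangles -/

/-- The cross product of two plane vectors: twice the signed area of the triangle they span. -/
def cr (x y : ℂ) : ℝ := x.re * y.im - x.im * y.re

/-- The standard right triangle, the parameter domain for all triangles. -/
def stdTri : Set (ℝ × ℝ) := {p | 0 ≤ p.1 ∧ 0 ≤ p.2 ∧ p.1 + p.2 ≤ 1}

lemma mem_tri_iff {E : Type*} [AddCommGroup E] [Module ℝ E] (z : Fin 3 → E) (x : E) :
    x ∈ convexHull ℝ (Set.range z) ↔
      ∃ p ∈ stdTri, x = z 0 + (p.1 • (z 1 - z 0) + p.2 • (z 2 - z 0)) := by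
  constructor
  · intro hx
    refine convexHull_min (t := {y | ∃ p ∈ stdTri, y = z 0 + (p.1 • (z 1 - z 0) + p.2 • (z 2 - z 0))})
      ?_ ?_ hx
    · rintro _ ⟨i, rfl⟩
      fin_cases i
      · exact ⟨(0, 0), by simp [stdTri], by simp⟩
      · exact ⟨(1, 0), by simp [stdTri], by simp⟩
      · exact ⟨(0, 1), by simp [stdTri], by simp⟩
    · rintro _ ⟨p, ⟨hp1, hp2, hp3⟩, rfl⟩ _ ⟨q, ⟨hq1, hq2, hq3⟩, rfl⟩ a b ha hb hab
      refine ⟨a • p + b • q, ⟨?_, ?_, ?_⟩, ?_⟩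
      · simp only [Prod.fst_add, Prod.smul_fst, smul_eq_mul]; positivity
      · simp only [Prod.snd_add, Prod.smul_snd, smul_eq_mul]; positivity
      · simp only [Prod.fst_add, Prod.smul_fst, Prod.snd_add, Prod.smul_snd, smul_eq_mul]
        nlinarith
      · simp only [Prod.fst_add, Prod.smul_fst, Prod.snd_add, Prod.smul_snd, smul_eq_mul]
        have : b = 1 - a := by linarith
        subst this
        module
  · rintro ⟨⟨s, t⟩, ⟨hs, ht, hst⟩, rfl⟩
    simp only at hs ht hst
    refine mem_convexHull_of_exists_fintype ![1 - s - t, s, t] z ?_ ?_ (fun i => ⟨i, rfl⟩) ?_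
    · intro i; fin_cases i <;> simp <;> linarith
    · simp only [Fin.sum_univ_three, Matrix.cons_val]; ring
    · simp [Fin.sum_univ_three]; module

lemma isClosed_stdTri : IsClosed stdTri := by
  have : stdTri = {p : ℝ × ℝ | 0 ≤ p.1} ∩ ({p | 0 ≤ p.2} ∩ {p | p.1 + p.2 ≤ 1}) := rfl
  rw [this]
  exact (isClosed_le (by fun_prop) (by fun_prop)).inter
    ((isClosed_le (by fun_prop) (by fun_prop)).inter (isClosed_le (by fun_prop) (by fun_prop)))

lemma integral_tri (z : Fin 3 → ℂ) (hz : cr (z 1 - z 0) (z 2 - z 0) ≠ 0) (f : ℂ → ℂ) :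
    ∫ x in convexHull ℝ (Set.range z), f x = |cr (z 1 - z 0) (z 2 - z 0)| •
      ∫ p in stdTri, f (z 0 + (p.1 * (z 1 - z 0) + p.2 * (z 2 - z 0))) := by
  set w1 := z 1 - z 0 with hw1
  set w2 := z 2 - z 0 with hw2
  let L : ℝ × ℝ →L[ℝ] ℝ × ℝ := LinearMap.toContinuousLinearMap
    (Matrix.toLin (Module.Basis.finTwoProd ℝ) (Module.Basis.finTwoProd ℝ) !![w1.re, w2.re; w1.im, w2.im])
  have hLdet : L.det = cr w1 w2 := by
    simp only [L, LinearMap.det_toContinuousLinearMap, LinearMap.det_toLin,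
      Matrix.det_fin_two_of, cr]
    ring
  have hL : ∀ p, L p = (w1.re * p.1 + w2.re * p.2, w1.im * p.1 + w2.im * p.2) := by
    intro p
    simp [L, Matrix.toLin_finTwoProd_apply]
  let e := Complex.measurableEquivRealProd
  let ψ : ℝ × ℝ → ℝ × ℝ := fun p => ((z 0).re, (z 0).im) + L p
  have hψ : ∀ p : ℝ × ℝ, e.symm (ψ p) = z 0 + (p.1 * w1 + p.2 * w2) := by
    intro p
    apply Complex.ext <;> simp [e, ψ, hL, Complex.measurableEquivRealProd] <;> ring
  have hset : convexHull ℝ (Set.range z) = e ⁻¹' (ψ '' stdTri) := by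
    ext x
    rw [mem_tri_iff]
    constructor
    · rintro ⟨p, hp, hx⟩
      refine ⟨p, hp, ?_⟩
      rw [← e.symm.injective.eq_iff, hψ, e.symm_apply_apply, hx]; simp [hw1, hw2]
    · rintro ⟨p, hp, hx⟩
      refine ⟨p, hp, ?_⟩
      rw [← e.symm.injective.eq_iff, hψ, e.symm_apply_apply] at hx
      rw [← hx]; simp [hw1, hw2]
  have hinj : Set.InjOn ψ stdTri := by
    intro p _ q _ hpq
    simp only [ψ, add_right_inj, hL, Prod.mk.injEq] at hpq
    obtain ⟨h1, h2⟩ := hpq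
    have e1 : cr w1 w2 * (p.1 - q.1) = 0 := by
      simp only [cr]; linear_combination w2.im * h1 - w2.re * h2
    have e2 : cr w1 w2 * (p.2 - q.2) = 0 := by
      simp only [cr]; linear_combination w1.re * h2 - w1.im * h1
    have e1' := (mul_eq_zero.1 e1).resolve_left hz
    have e2' := (mul_eq_zero.1 e2).resolve_left hz
    ext <;> linarith
  have hmp : MeasurePreserving e volume volume := Complex.volume_preserving_equiv_real_prod
  have h1 : ∫ x in convexHull ℝ (Set.range z), f x = ∫ y in ψ '' stdTri, f (e.symm y) := by
    rw [hset, ← hmp.setIntegral_preimage_emb e.measurableEmbedding]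
    simp
  rw [h1, integral_image_eq_integral_abs_det_fderiv_smul volume isClosed_stdTri.measurableSet
    (f' := fun _ => L) (fun p _ => (L.hasFDerivAt.const_add _).hasFDerivWithinAt) hinj,
    integral_smul, hLdet]
  congr 2
  ext p
  rw [hψ]

open Polynomial in
/-- The integral of the second derivative of `P` over the triangle with vertices `A`, `A + q`, `A + r`
(up to the Jacobian) is the second divided difference of `P` at the three vertices. -/
lemma integral_stdTri (P : ℂ[X]) (A q r : ℂ) (hq : q ≠ 0) (hr : r ≠ 0) (hqr : q ≠ r) :
    ∫ p in stdTri, (derivative (derivative P)).eval (A + (p.1 * q + p.2 * r)) =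
      P.eval A / (q * r) + P.eval (A + q) / (q * (q - r)) + P.eval (A + r) / (r * (r - q)) := by
  set P1 := derivative P
  have hdP : ∀ (Q : ℂ[X]) (a b : ℂ) (x : ℝ),
      HasDerivAt (fun x : ℝ => Q.eval (a + x * b)) ((derivative Q).eval (a + x * b) * b) x := by
    intro Q a b x
    have h1 : HasDerivAt (fun y : ℝ => a + y * b) b x := by
      simpa using ((Complex.ofRealCLM.hasDerivAt (x := x)).mul_const b).const_add a
    exact (Q.hasDerivAt _).comp x h1
  have hint : ∀ (Q : ℂ[X]) (a b : ℂ), b ≠ 0 → ∀ y : ℝ,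
      ∫ x in (0:ℝ)..y, (derivative Q).eval (a + x * b) = (Q.eval (a + y * b) - Q.eval a) / b := by
    intro Q a b hb y
    have h2 := intervalIntegral.integral_eq_sub_of_hasDerivAt (a := 0) (b := y)
      (fun x _ => hdP Q a b x) (by apply Continuous.intervalIntegrable; fun_prop)
    rw [intervalIntegral.integral_mul_const] at h2
    rw [eq_div_iff hb, h2]; simp
  set f : ℝ × ℝ → ℂ := fun p => (derivative P1).eval (A + (p.1 * q + p.2 * r)) with hf
  have hfc : Continuous f := by fun_prop
  have hcpt : IsCompact stdTri := by
    refine (isCompact_Icc (a := ((0:ℝ),(0:ℝ))) (b := (1,1))).of_isClosed_subset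
      isClosed_stdTri ?_
    rintro ⟨s, t⟩ ⟨h1, h2, h3⟩
    simp only at h1 h2 h3
    exact ⟨⟨h1, h2⟩, ⟨by simp only; linarith, by simp only; linarith⟩⟩
  have hI : Integrable (stdTri.indicator f) (volume.prod volume) := by
    rw [integrable_indicator_iff isClosed_stdTri.measurableSet]
    exact hfc.continuousOn.integrableOn_compact hcpt
  rw [← integral_indicator isClosed_stdTri.measurableSet, Measure.volume_eq_prod,
    integral_prod _ hI]
  have hin : ∀ x : ℝ, ∫ y, stdTri.indicator f (x, y) =
      (Set.Icc (0:ℝ) 1).indicator (fun x : ℝ =>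
        (P1.eval ((A + r) + x * (q - r)) - P1.eval (A + x * q)) / r) x := by
    intro x
    by_cases hx : x ∈ Set.Icc (0:ℝ) 1
    · rw [Set.indicator_of_mem hx]
      have : (fun y => stdTri.indicator f (x, y)) = (Set.Icc (0:ℝ) (1 - x)).indicator
          fun y : ℝ => (derivative P1).eval ((A + x * q) + y * r) := by
        ext y
        have : ((x, y) ∈ stdTri) ↔ y ∈ Set.Icc (0:ℝ) (1 - x) := by
          simp only [stdTri, Set.mem_ofPred_eq, Set.mem_Icc]
          have := hx.1
          constructor
          · rintro ⟨a, b, c⟩; constructor <;> linarith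
          · rintro ⟨a, b⟩; refine ⟨by linarith, by linarith, by linarith⟩
        by_cases hy : y ∈ Set.Icc (0:ℝ) (1 - x)
        · rw [Set.indicator_of_mem hy, Set.indicator_of_mem (this.2 hy)]
          simp only [hf]; ring_nf
        · rw [Set.indicator_of_notMem hy, Set.indicator_of_notMem (mt this.1 hy)]
      rw [this, integral_indicator measurableSet_Icc, integral_Icc_eq_integral_Ioc,
        ← intervalIntegral.integral_of_le (by linarith [hx.2]), hint P1 _ _ hr]
      push_cast; ring_nf
    · rw [Set.indicator_of_notMem hx]
      have : (fun y => stdTri.indicator f (x, y)) = fun _ => 0 := by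
        ext y
        refine Set.indicator_of_notMem ?_ _
        rintro ⟨h1, h2, h3⟩
        simp only at h1 h2 h3
        exact hx ⟨h1, by linarith⟩
      rw [this]; simp
  simp_rw [hin]
  rw [integral_indicator measurableSet_Icc, integral_Icc_eq_integral_Ioc,
    ← intervalIntegral.integral_of_le (by norm_num), intervalIntegral.integral_div,
    intervalIntegral.integral_sub (by apply Continuous.intervalIntegrable; fun_prop)
      (by apply Continuous.intervalIntegrable; fun_prop), hint P _ _ (sub_ne_zero.2 hqr),
      hint P _ _ hq]
  have h1 : q - r ≠ 0 := sub_ne_zero.2 hqr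
  have h2 : r - q ≠ 0 := sub_ne_zero.2 hqr.symm
  have e1 : A + r + ((1:ℝ):ℂ) * (q - r) = A + q := by push_cast; ring
  have e2 : A + ((1:ℝ):ℂ) * q = A + q := by push_cast; ring
  have e3 : r - q = -(q - r) := by ring
  rw [e1, e2, e3]
  field_simp
  ring

/-! ### The edge identity -/

/-- The direction of the line spanned by `w`, encoded as the unit complex number `w / conj w`, which is
the same for `w` and `-w`. The value at `w = 0` is the junk value `0`. -/
def tau (w : ℂ) : ℂ := w / (starRingEnd ℂ) w

lemma norm_tau {w : ℂ} (hw : w ≠ 0) : ‖tau w‖ = 1 := by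
  rw [tau, norm_div, RCLike.norm_conj, div_self (norm_ne_zero_iff.2 hw)]

/-- The orientation of a triangle: `1` if it is counterclockwise, `-1` if it is clockwise. -/
def orient (z : Fin 3 → ℂ) : ℝ := Real.sign (cr (z 1 - z 0) (z 2 - z 0))

lemma add_conj_ne_zero {l w : ℂ} (hl : ‖l‖ < 1) (hw : w ≠ 0) :
    w + l * (starRingEnd ℂ) w ≠ 0 := by
  intro h
  have h1 : ‖w‖ = ‖l‖ * ‖w‖ := by
    have : w = -(l * (starRingEnd ℂ) w) := by linear_combination h
    conv_lhs => rw [this]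
    rw [norm_neg, norm_mul, RCLike.norm_conj]
  have := norm_pos_iff.2 hw
  nlinarith

lemma inv_tau_add {l w : ℂ} (hw : w ≠ 0) :
    1 / (tau w + l) = (starRingEnd ℂ) w / (w + l * (starRingEnd ℂ) w) := by
  have : (starRingEnd ℂ) w ≠ 0 := by simpa using hw
  rw [tau]
  by_cases h : w + l * (starRingEnd ℂ) w = 0
  · have : w / (starRingEnd ℂ) w + l = 0 := by field_simp; linear_combination h
    rw [this, h]; simp
  · field_simp

lemma sub_conj_eq (x y : ℂ) : (starRingEnd ℂ) x * y - x * (starRingEnd ℂ) y =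
    2 * Complex.I * (cr x y : ℂ) := by
  apply Complex.ext <;> simp [cr] <;> ring

lemma tri_edges (z : Fin 3 → ℂ) (hz : cr (z 1 - z 0) (z 2 - z 0) ≠ 0) :
    z 1 - z 0 ≠ 0 ∧ z 2 - z 1 ≠ 0 ∧ z 0 - z 2 ≠ 0 := by
  refine ⟨fun h => hz ?_, fun h => hz ?_, fun h => hz ?_⟩
  · simp [h, cr]
  · rw [sub_eq_zero.1 h]; simp [cr]; ring
  · rw [sub_eq_zero.1 h]; simp [cr]

open Polynomial in
/-- The integral over a triangle of `Q (x + l * conj x)`, with `Q` the second derivative of `P`, as a sum over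
oriented edges in which each term only involves the end points and the direction of the edge. -/
lemma integral_tri_poly (z : Fin 3 → ℂ) (hz : cr (z 1 - z 0) (z 2 - z 0) ≠ 0) (P : ℂ[X])
    (l : ℂ) (hl : ‖l‖ < 1) :
    -2 * Complex.I * ∫ x in convexHull ℝ (Set.range z),
        (derivative (derivative P)).eval (x + l * (starRingEnd ℂ) x) =
      orient z * ∑ i, (P.eval (z (i + 1) + l * (starRingEnd ℂ) (z (i + 1))) -
        P.eval (z i + l * (starRingEnd ℂ) (z i))) / (tau (z (i + 1) - z i) + l) := by
  obtain ⟨h0, h1, h2⟩ := tri_edges z hz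
  set w1 := z 1 - z 0 with hw1
  set w2 := z 2 - z 0 with hw2
  have hw2' : w2 ≠ 0 := by rw [← neg_ne_zero]; simpa [hw2] using h2
  have hw12 : w2 - w1 ≠ 0 := by simpa [hw1, hw2] using h1
  set q := w1 + l * (starRingEnd ℂ) w1 with hq
  set r := w2 + l * (starRingEnd ℂ) w2 with hr
  have hq0 : q ≠ 0 := add_conj_ne_zero hl h0
  have hr0 : r ≠ 0 := add_conj_ne_zero hl hw2'
  have hrq : r - q ≠ 0 := by
    have := add_conj_ne_zero hl hw12
    rw [map_sub] at this
    intro h; apply this; rw [← h, hq, hr]; ring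
  set A := z 0 + l * (starRingEnd ℂ) (z 0) with hA
  have hz1 : z 1 + l * (starRingEnd ℂ) (z 1) = A + q := by
    rw [hA, hq, hw1, map_sub]; ring
  have hz2 : z 2 + l * (starRingEnd ℂ) (z 2) = A + r := by
    rw [hA, hr, hw2, map_sub]; ring
  have hI : ∫ x in convexHull ℝ (Set.range z),
        (derivative (derivative P)).eval (x + l * (starRingEnd ℂ) x) =
      |cr w1 w2| * (P.eval A / (q * r) + P.eval (A + q) / (q * (q - r)) +
        P.eval (A + r) / (r * (r - q))) := by
    rw [integral_tri z hz, ← integral_stdTri P A q r hq0 hr0 (fun h => hrq (by rw [h, sub_self])),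
      Complex.real_smul]
    congr 1
    refine integral_congr_ae (Filter.Eventually.of_forall fun p => ?_)
    simp only [map_add, map_mul, Complex.conj_ofReal]
    congr 1
    rw [hA, hq, hr]; ring
  have habs : ((|cr w1 w2| : ℝ) : ℂ) = orient z * cr w1 w2 := by
    rw [orient, ← Complex.ofReal_mul]
    congr 1
    rcases lt_or_gt_of_ne hz with h | h
    · rw [Real.sign_of_neg h, abs_of_neg h]; ring
    · rw [Real.sign_of_pos h, abs_of_pos h]; ring
  have e1 : tau (z 2 - z 1) = tau (w2 - w1) := by congr 1; rw [hw1, hw2]; ring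
  have e2 : tau (z 0 - z 2) = tau w2 := by
    have : z 0 - z 2 = - w2 := by rw [hw2]; ring
    rw [this, tau, tau, map_neg, neg_div_neg_eq]
  have e12 : w2 - w1 + l * (starRingEnd ℂ) (w2 - w1) = r - q := by
    rw [hq, hr, map_sub]; ring
  have key := sub_conj_eq w1 w2
  rw [hI, habs, Fin.sum_univ_three]
  simp only [zero_add, show (2 : Fin 3) + 1 = 0 from rfl,
    show (1 : Fin 3) + 1 = 2 from rfl]
  rw [hz1, hz2, e1, e2, div_eq_mul_one_div (eval (A + q) P - eval A P),
    div_eq_mul_one_div (eval (A + r) P - eval (A + q) P),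
    div_eq_mul_one_div (eval A P - eval (A + r) P), ← hw1, inv_tau_add hw12,
    inv_tau_add hw2', inv_tau_add h0, e12, ← hr, ← hq, map_sub (starRingEnd ℂ) w2 w1]
  have hk1 : -2 * Complex.I * (cr w1 w2 : ℂ) = (starRingEnd ℂ) w2 * q - (starRingEnd ℂ) w1 * r := by
    rw [hq, hr]; linear_combination key
  have hqr : q - r ≠ 0 := by rw [← neg_sub, neg_ne_zero]; exact hrq
  have e3 : r - q = - (q - r) := by ring
  calc _ = (orient z : ℂ) * ((-2 * Complex.I * (cr w1 w2 : ℂ)) * (P.eval A / (q * r) +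
            P.eval (A + q) / (q * (q - r)) + P.eval (A + r) / (r * (r - q)))) := by ring
    _ = _ := by
      rw [hk1, e3]
      congr 1
      field_simp
      ring

/-- If a formal combination of triangles integrates every continuous function to zero, then the
corresponding combination of oriented edges vanishes formally: each function `H` of a vertex and an
edge direction, differenced along the edges, sums to zero. -/
theorem edge_sum_eq_zero {ι : Type*} [Fintype ι] (z : ι → Fin 3 → ℂ) (ε : ι → ℂ)
    (hz : ∀ t, cr (z t 1 - z t 0) (z t 2 - z t 0) ≠ 0)
    (hI : ∀ f : ℂ → ℂ, Continuous f → ∑ t, ε t * ∫ x in convexHull ℝ (Set.range (z t)), f x = 0)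
    (H : ℂ → ℂ → ℂ) :
    ∑ t, ε t * (orient (z t) * ∑ i, (H (z t (i + 1)) (tau (z t (i + 1) - z t i)) -
      H (z t i) (tau (z t (i + 1) - z t i)))) = 0 := by
  have hne : ∀ t i, z t (i + 1) - z t i ≠ 0 := by
    intro t i
    obtain ⟨h0, h1, h2⟩ := tri_edges (z t) (hz t)
    fin_cases i
    · exact h0
    · exact h1
    · exact h2
  let J := (ι × Fin 3) ⊕ (ι × Fin 3)
  let v : J → ℂ := Sum.elim (fun p => z p.1 (p.2 + 1)) (fun p => z p.1 p.2)
  let τ : J → ℂ := Sum.elim (fun p => tau (z p.1 (p.2 + 1) - z p.1 p.2))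
    (fun p => tau (z p.1 (p.2 + 1) - z p.1 p.2))
  let s : J → ℂ := Sum.elim (fun p => ε p.1 * orient (z p.1)) (fun p => -(ε p.1 * orient (z p.1)))
  have hconv : ∀ K : ℂ → ℂ → ℂ, ∑ j, s j * K (v j) (τ j) =
      ∑ t, ε t * (orient (z t) * ∑ i, (K (z t (i + 1)) (tau (z t (i + 1) - z t i)) -
      K (z t i) (tau (z t (i + 1) - z t i)))) := by
    intro K
    rw [Fintype.sum_sum_type, Fintype.sum_prod_type, Fintype.sum_prod_type,
      ← Finset.sum_add_distrib]
    refine Finset.sum_congr rfl fun t _ => ?_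
    rw [← Finset.sum_add_distrib, Finset.mul_sum, Finset.mul_sum]
    refine Finset.sum_congr rfl fun i _ => ?_
    simp only [s, v, τ, Sum.elim_inl, Sum.elim_inr]
    ring
  rw [← hconv]
  refine sum_eq_zero_of_forall_eval v τ s ?_ ?_ H
  · rintro (⟨t, i⟩ | ⟨t, i⟩) <;> exact norm_tau (hne t i)
  · intro l hl P
    rw [hconv (fun x d => P.eval (x + l * (starRingEnd ℂ) x) / (d + l))]
    have h1 := hI (fun x => (Polynomial.derivative (Polynomial.derivative P)).eval
      (x + l * (starRingEnd ℂ) x)) (by fun_prop)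
    rw [← mul_zero (-2 * Complex.I), ← h1, Finset.mul_sum]
    refine Finset.sum_congr rfl fun t _ => ?_
    simp only [← sub_div]
    rw [← integral_tri_poly (z t) (hz t) P l hl]
    ring

/-! ### Conjugated areas of tiles -/

/-- `F` behaves like the Galois conjugation `ζ ↦ ζ ^ k` on `M`-th roots of unity: it is additive,
semilinear over the group of `M`-th roots of unity, fixes `1` and commutes with complex conjugation. -/
structure Conj (M k : ℕ) (F : ℂ →+ ℂ) : Prop where
  smul : ∀ d : ℂ, d ^ M = 1 → ∀ z, F (d * z) = d ^ k * F z
  one : F 1 = 1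
  conj : ∀ z, F ((starRingEnd ℂ) z) = (starRingEnd ℂ) (F z)

lemma exists_conj (M k : ℕ) (hM : 0 < M) (hk : k.Coprime M) : ∃ F : ℂ →+ ℂ, Conj M k F := by
  obtain ⟨F, h1, h2, h3⟩ := exists_semilinear M k hM hk
  refine ⟨F, ⟨?_, h2, h3⟩⟩
  intro d hd z
  have : NeZero M := ⟨hM.ne'⟩
  obtain ⟨i, -, rfl⟩ := (Complex.isPrimitiveRoot_exp M hM.ne').eq_pow_of_pow_eq_one hd
  clear hd
  induction i generalizing z with
  | zero => simp
  | succ i ih => rw [pow_succ, mul_assoc, ih, h1]; ring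

lemma Conj.root {M k : ℕ} {F : ℂ →+ ℂ} (hF : Conj M k F) {d : ℂ} (hd : d ^ M = 1) :
    F d = d ^ k := by
  have := hF.smul d hd 1
  rwa [mul_one, hF.one, mul_one] at this

lemma tau_mul_conj {w : ℂ} (hw : w ≠ 0) : tau w * (starRingEnd ℂ) w = w := by
  rw [tau, div_mul_cancel₀]; simpa using hw

lemma tau_neg (w : ℂ) : tau (-w) = tau w := by rw [tau, tau, map_neg, neg_div_neg_eq]

lemma conj_mul_self_of_norm {d : ℂ} (hd : ‖d‖ = 1) : (starRingEnd ℂ) d * d = 1 := by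
  rw [mul_comm, Complex.mul_conj, Complex.normSq_eq_norm_sq, hd]; simp

/-- A vector whose direction is an `M`-th root of unity `d` is sent to a vector of direction `d ^ k`. -/
lemma Conj.edge_dir {M k : ℕ} {F : ℂ →+ ℂ} (hF : Conj M k F) {w : ℂ} (hw : w ≠ 0)
    (hd : tau w ^ M = 1) : F w = tau w ^ k * (starRingEnd ℂ) (F w) := by
  conv_lhs => rw [← tau_mul_conj hw]
  rw [hF.smul _ hd, hF.conj]

open Classical in
/-- The function of a point `v` and a direction `d` whose difference along an edge `AB` is
`cr (F A) (F B)` if the direction of `AB` is an `M`-th root of unity, and `0` otherwise. -/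
def edgeFn (M : ℕ) (F : ℂ →+ ℂ) (v d : ℂ) : ℝ :=
  if d ^ M = 1 then -(1 / 2) * (F v ^ 2 * (starRingEnd ℂ) (F d)).im else 0

lemma edgeFn_sub {M k : ℕ} {F : ℂ →+ ℂ} (hF : Conj M k F) {A B : ℂ} (hAB : B - A ≠ 0)
    (hd : tau (B - A) ^ M = 1) :
    edgeFn M F B (tau (B - A)) - edgeFn M F A (tau (B - A)) = cr (F A) (F B) := by
  have h1 := hF.edge_dir hAB hd
  have h2 : (starRingEnd ℂ) (tau (B - A) ^ k) * tau (B - A) ^ k = 1 :=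
    conj_mul_self_of_norm (by rw [norm_pow, norm_tau hAB, one_pow])
  rw [edgeFn, edgeFn, if_pos hd, if_pos hd, hF.root hd]
  set D := tau (B - A) ^ k
  rw [map_sub] at h1
  have h3 : (F B ^ 2 * (starRingEnd ℂ) D) - (F A ^ 2 * (starRingEnd ℂ) D)
      = (F A + F B) * (starRingEnd ℂ) (F B - F A) := by
    linear_combination (F A + F B) * (starRingEnd ℂ) D * h1 +
      (F A + F B) * (starRingEnd ℂ) (F B - F A) * h2
  have h4 := congrArg Complex.im h3
  rw [Complex.sub_im] at h4
  have h5 : ((F A + F B) * (starRingEnd ℂ) (F B - F A)).im = -2 * cr (F A) (F B) := by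
    simp [cr]; ring
  linarith

lemma exp_angle {x y : ℂ} {α : ℝ} (hx : x ≠ 0) (hy : y ≠ 0)
    (h : InnerProductGeometry.angle x y = α) :
    (starRingEnd ℂ) x * y = (‖x‖ * ‖y‖ : ℝ) * Complex.exp ((Real.sign (cr x y) * α : ℝ) * Complex.I)
    ∨ cr x y = 0 := by
  by_cases hc : cr x y = 0
  · exact Or.inr hc
  left
  rw [InnerProductGeometry.angle_comm, Complex.angle_eq_abs_arg hy hx] at h
  have him : ((starRingEnd ℂ) x * y).im = cr x y := by simp [cr]; ring
  have hdiv : y / x = ((starRingEnd ℂ) x * y) / (Complex.normSq x : ℂ) := by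
    have : (Complex.normSq x : ℂ) = (starRingEnd ℂ) x * x := by
      rw [mul_comm, Complex.mul_conj]
    rw [this]
    have : (starRingEnd ℂ) x ≠ 0 := by simpa using hx
    field_simp
  have hpos : 0 < Complex.normSq x := Complex.normSq_pos.2 hx
  have hdim : (y / x).im = cr x y / Complex.normSq x := by
    rw [hdiv, Complex.div_ofReal_im, him]
  have harg : Complex.arg (y / x) = Real.sign (cr x y) * α := by
    rcases lt_or_gt_of_ne hc with hn | hp
    · rw [Real.sign_of_neg hn, ← h, abs_of_neg]; · ring
      exact Complex.arg_neg_iff.2 (by rw [hdim]; exact div_neg_of_neg_of_pos hn hpos)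
    · rw [Real.sign_of_pos hp, ← h, abs_of_nonneg]; · ring
      exact Complex.arg_nonneg_iff.2 (by rw [hdim]; positivity)
  have h1 := Complex.norm_mul_exp_arg_mul_I (y / x)
  rw [harg] at h1
  have h2 : (starRingEnd ℂ) x * y = (Complex.normSq x : ℂ) * (y / x) := by
    rw [hdiv]; field_simp [hpos.ne']
  rw [h2, ← h1, norm_div, Complex.normSq_eq_norm_sq, ← mul_assoc]
  congr 1
  have : ‖x‖ ≠ 0 := norm_ne_zero_iff.2 hx
  rw [← Complex.ofReal_mul]
  congr 1
  field_simp

lemma tau_of_exp {x y : ℂ} (hx : x ≠ 0) (hy : y ≠ 0) {θ : ℝ}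
    (h : (starRingEnd ℂ) x * y = (‖x‖ * ‖y‖ : ℝ) * Complex.exp (θ * Complex.I)) :
    tau y = tau x * Complex.exp (θ * Complex.I) ^ 2 := by
  have hx' : (starRingEnd ℂ) x ≠ 0 := by simpa using hx
  have hy' : (starRingEnd ℂ) y ≠ 0 := by simpa using hy
  have h2 := congrArg (starRingEnd ℂ) h
  have he : (starRingEnd ℂ) (Complex.exp (θ * Complex.I)) * Complex.exp (θ * Complex.I) = 1 :=
    conj_mul_self_of_norm (Complex.norm_exp_ofReal_mul_I θ)
  simp only [map_mul, Complex.conj_conj, Complex.conj_ofReal] at h2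
  set e := Complex.exp (θ * Complex.I)
  rw [tau, tau]
  field_simp
  have : (starRingEnd ℂ) y * x * e ^ 2 = ((‖x‖ * ‖y‖ : ℝ) : ℂ) * e := by
    linear_combination e ^ 2 * h2 + ((‖x‖ * ‖y‖ : ℝ) : ℂ) * e * he
  rw [← h] at this
  linear_combination -this

/-- At a corner of angle `α ∈ (π / M) ℤ` either both or neither of the two sides have direction an
`M`-th root of unity, and in the first case the map `F` turns the corner into one with line angle
`k α`, with the same orientation; the real factor `ρ` may be negative. -/
lemma corner {M k : ℕ} {F : ℂ →+ ℂ} (hF : Conj M k F) {x y : ℂ} {α : ℝ}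
    (hc : cr x y ≠ 0) (h : InnerProductGeometry.angle x y = α)
    (hα : ∃ n : ℤ, M * α = n * π) :
    (tau x ^ M = 1 ↔ tau y ^ M = 1) ∧ (tau x ^ M = 1 → ∃ ρ : ℝ, (starRingEnd ℂ) (F x) * F y =
      ρ * Complex.exp (Real.sign (cr x y) * (k * α) * Complex.I)) := by
  have hx : x ≠ 0 := by rintro rfl; simp [cr] at hc
  have hy : y ≠ 0 := by rintro rfl; simp [cr] at hc
  have h1 := (exp_angle hx hy h).resolve_right hc
  set o := Real.sign (cr x y) with ho
  have ho' : o = 1 ∨ o = -1 := by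
    rcases lt_or_gt_of_ne hc with hn | hp
    · right; rw [ho, Real.sign_of_neg hn]
    · left; rw [ho, Real.sign_of_pos hp]
  set e := Complex.exp ((o * α : ℝ) * Complex.I) with he
  have htau := tau_of_exp hx hy h1
  rw [← he] at htau
  have heM : (e ^ 2) ^ M = 1 := by
    obtain ⟨n, hn⟩ := hα
    rw [he, ← pow_mul, ← Complex.exp_nat_mul, Complex.exp_eq_one_iff]
    have hn' : (M : ℂ) * α = n * π := by exact_mod_cast hn
    rcases ho' with h | h
    · refine ⟨n, ?_⟩
      rw [h]; push_cast; linear_combination 2 * Complex.I * hn'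
    · refine ⟨-n, ?_⟩
      rw [h]; push_cast; linear_combination -2 * Complex.I * hn'
  have hiff : tau x ^ M = 1 ↔ tau y ^ M = 1 := by
    rw [htau, mul_pow, heM, mul_one]
  refine ⟨hiff, fun hdx => ?_⟩
  have hdy := hiff.1 hdx
  have hX := hF.edge_dir hx hdx
  have hY := hF.edge_dir hy hdy
  have hnx : (starRingEnd ℂ) (tau x ^ k) * tau x ^ k = 1 :=
    conj_mul_self_of_norm (by rw [norm_pow, norm_tau hx, one_pow])
  have hne : (starRingEnd ℂ) (e ^ k) * e ^ k = 1 :=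
    conj_mul_self_of_norm (by rw [norm_pow, he, Complex.norm_exp_ofReal_mul_I, one_pow])
  have hek : Complex.exp (o * (k * α) * Complex.I) = e ^ k := by
    rw [he, ← Complex.exp_nat_mul]; congr 1; push_cast; ring
  rw [hek]
  set Q := (starRingEnd ℂ) (F x) * F y with hQ
  -- `Q * conj (e ^ k)` is real because it is fixed by conjugation.
  have hreal : (starRingEnd ℂ) (Q * (starRingEnd ℂ) (e ^ k)) = Q * (starRingEnd ℂ) (e ^ k) := by
    rw [htau, mul_pow, ← pow_mul, mul_comm 2 k, pow_mul] at hY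
    rw [hQ]
    simp only [map_mul, Complex.conj_conj]
    generalize tau x ^ k = d at *
    generalize e ^ k = E at *
    have hY' : (starRingEnd ℂ) (F y) * E = (starRingEnd ℂ) d * (starRingEnd ℂ) E * F y := by
      have h6 : (starRingEnd ℂ) (F y) * (((starRingEnd ℂ) d * d) * ((starRingEnd ℂ) E * E)) * E
          = (starRingEnd ℂ) d * (starRingEnd ℂ) E * F y := by
        linear_combination (-(starRingEnd ℂ) d * (starRingEnd ℂ) E) * hY
      rw [hnx, hne] at h6
      linear_combination h6
    have h7 : (starRingEnd ℂ) d * F x = (starRingEnd ℂ) (F x) := by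
      linear_combination (starRingEnd ℂ) d * hX + (starRingEnd ℂ) (F x) * hnx
    linear_combination F x * hY' + F y * (starRingEnd ℂ) E * h7
  obtain ⟨ρ, hρ⟩ := Complex.conj_eq_iff_real.1 hreal
  refine ⟨ρ, ?_⟩
  rw [← hρ]
  linear_combination -Q * hne

lemma im_conj_mul (x y : ℂ) : ((starRingEnd ℂ) x * y).im = cr x y := by simp [cr]; ring

lemma im_ofReal_exp (ρ θ : ℝ) : (ρ * Complex.exp (θ * Complex.I)).im = ρ * Real.sin θ := by
  rw [Complex.im_ofReal_mul, Complex.exp_ofReal_mul_I_im]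

/-- The conjugated signed area of a tile, multiplied by the orientation of the tile, is zero or has the
sign of the product of the sines of `k α`, `k β`, `k γ`. Writing `S` for twice that area, each corner
gives `S = ± ρ sin`, and the three factors `ρ` have a nonnegative product. -/
lemma tile_sign {M k : ℕ} {F : ℂ →+ ℂ} (hF : Conj M k F) (hk : Odd k) (z : Fin 3 → ℂ)
    (hz : cr (z 1 - z 0) (z 2 - z 0) ≠ 0) {α β γ : ℝ} (hsum : α + β + γ = π)
    (h0 : InnerProductGeometry.angle (z 1 - z 0) (z 2 - z 0) = α)
    (h1 : InnerProductGeometry.angle (z 2 - z 1) (z 0 - z 1) = β)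
    (h2 : InnerProductGeometry.angle (z 0 - z 2) (z 1 - z 2) = γ)
    (hα : ∃ n : ℤ, M * α = n * π) (hβ : ∃ n : ℤ, M * β = n * π) (hγ : ∃ n : ℤ, M * γ = n * π) :
    0 ≤ orient z * (∑ i, (edgeFn M F (z (i + 1)) (tau (z (i + 1) - z i)) -
      edgeFn M F (z i) (tau (z (i + 1) - z i)))) *
        (Real.sin (k * α) * Real.sin (k * β) * Real.sin (k * γ)) := by
  have hc1 : cr (z 2 - z 1) (z 0 - z 1) = cr (z 1 - z 0) (z 2 - z 0) := by simp [cr]; ring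
  have hc2 : cr (z 0 - z 2) (z 1 - z 2) = cr (z 1 - z 0) (z 2 - z 0) := by simp [cr]; ring
  obtain ⟨he0, he1, he2⟩ := tri_edges z hz
  obtain ⟨i0, r0⟩ := corner hF hz h0 hα
  obtain ⟨i1, r1⟩ := corner hF (hc1 ▸ hz) h1 hβ
  obtain ⟨i2, r2⟩ := corner hF (hc2 ▸ hz) h2 hγ
  rw [← neg_sub (z 0) (z 2), tau_neg] at i0
  rw [← neg_sub (z 1) (z 0), tau_neg] at i1
  rw [← neg_sub (z 2) (z 1), tau_neg] at i2
  set o := orient z with ho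
  have ho0 : Real.sign (cr (z 1 - z 0) (z 2 - z 0)) = o := rfl
  rw [hc1] at r1; rw [hc2] at r2
  rw [ho0] at r0 r1 r2
  have ho' : o = 1 ∨ o = -1 := by
    rcases lt_or_gt_of_ne hz with hn | hp
    · right; rw [← ho0, Real.sign_of_neg hn]
    · left; rw [← ho0, Real.sign_of_pos hp]
  rw [Fin.sum_univ_three]
  simp only [zero_add, show (2 : Fin 3) + 1 = 0 from rfl, show (1 : Fin 3) + 1 = 2 from rfl]
  by_cases hd : tau (z 1 - z 0) ^ M = 1
  swap
  · have hd1 : ¬ tau (z 2 - z 1) ^ M = 1 := fun h => hd (i1.1 h)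
    have hd2 : ¬ tau (z 0 - z 2) ^ M = 1 := fun h => hd (i0.2 h)
    simp [edgeFn, hd, hd1, hd2]
  have hd2 := i0.1 hd
  have hd1 := i1.2 hd
  rw [edgeFn_sub hF he0 hd, edgeFn_sub hF he1 hd1, edgeFn_sub hF he2 hd2]
  obtain ⟨a, ra⟩ := r0 hd
  obtain ⟨b, rb⟩ := r1 hd1
  obtain ⟨c, rc⟩ := r2 hd2
  set S := cr (F (z 0)) (F (z 1)) + cr (F (z 1)) (F (z 2)) + cr (F (z 2)) (F (z 0)) with hS
  have key : ∀ (x y : ℂ) (r t : ℝ), cr (F x) (F y) = S →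
      (starRingEnd ℂ) (F x) * F y = r * Complex.exp (o * (k * t) * Complex.I) →
      S = o * r * Real.sin (k * t) := by
    intro x y r t hxy hr
    have h := congrArg Complex.im hr
    have he : (o : ℂ) * (k * t) * Complex.I = ((o * (k * t) : ℝ) : ℂ) * Complex.I := by
      push_cast; ring
    rw [im_conj_mul, hxy, he, im_ofReal_exp] at h
    rw [h]
    rcases ho' with h | h <;> rw [h] <;> simp
  have Sa := key _ _ a α (by simp [hS, cr, map_sub]; ring) ra
  have Sb := key _ _ b β (by simp [hS, cr, map_sub]; ring) rb
  have Sc := key _ _ c γ (by simp [hS, cr, map_sub]; ring) rc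
  have habc : 0 ≤ a * b * c := by
    have hexp : Complex.exp (o * (k * α) * Complex.I) * Complex.exp (o * (k * β) * Complex.I) *
        Complex.exp (o * (k * γ) * Complex.I) = -1 := by
      have hs : (α : ℂ) + β + γ = π := by exact_mod_cast hsum
      rw [← Complex.exp_add, ← Complex.exp_add]
      have e1 : (o : ℂ) * (k * α) * Complex.I + o * (k * β) * Complex.I + o * (k * γ) * Complex.I
          = k * (o * (π * Complex.I)) := by rw [← hs]; ring
      rw [e1, Complex.exp_nat_mul]
      rcases ho' with h | h
      · rw [h]; simp [hk.neg_one_pow]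
      · rw [h]; simp [Complex.exp_neg, hk.neg_one_pow]
    have hprod : ((a * b * c : ℝ) : ℂ) = ((Complex.normSq (F (z 1 - z 0)) *
        Complex.normSq (F (z 2 - z 1)) * Complex.normSq (F (z 0 - z 2)) : ℝ) : ℂ) := by
      push_cast
      rw [← Complex.mul_conj, ← Complex.mul_conj, ← Complex.mul_conj]
      have e0 : F (z 2 - z 0) = - F (z 0 - z 2) := by rw [← map_neg, neg_sub]
      have e1 : F (z 0 - z 1) = - F (z 1 - z 0) := by rw [← map_neg, neg_sub]
      have e2 : F (z 1 - z 2) = - F (z 2 - z 1) := by rw [← map_neg, neg_sub]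
      rw [e0] at ra; rw [e1] at rb; rw [e2] at rc
      have hm := congrArg₂ (· * ·) (congrArg₂ (· * ·) ra rb) rc
      linear_combination hm + (a * b * c : ℂ) * hexp
    rw [Complex.ofReal_inj.1 hprod]
    exact mul_nonneg (mul_nonneg (Complex.normSq_nonneg _) (Complex.normSq_nonneg _))
      (Complex.normSq_nonneg _)
  by_cases hS0 : S = 0
  · rw [hS0]; simp
  have hoo : o ^ 4 = 1 := by rcases ho' with h | h <;> rw [h] <;> norm_num
  have h3 : S ^ 2 * (o * S * (Real.sin (k * α) * Real.sin (k * β) * Real.sin (k * γ))) =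
      (a * b * c) * (Real.sin (k * α) * Real.sin (k * β) * Real.sin (k * γ)) ^ 2 := by
    generalize Real.sin (k * α) = u at *
    generalize Real.sin (k * β) = v at *
    generalize Real.sin (k * γ) = w at *
    calc S ^ 2 * (o * S * (u * v * w)) = o * (S * S * S) * (u * v * w) := by ring
      _ = o * ((o * a * u) * (o * b * v) * (o * c * w)) * (u * v * w) := by
        rw [← Sa, ← Sb, ← Sc]
      _ = o ^ 4 * ((a * b * c) * (u * v * w) ^ 2) := by ring
      _ = _ := by rw [hoo, one_mul]
  have h4 : 0 ≤ S ^ 2 * (o * S * (Real.sin (k * α) * Real.sin (k * β) * Real.sin (k * γ))) := by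
    rw [h3]; positivity
  exact nonneg_of_mul_nonneg_right h4 (by positivity)

/-! ### The fan decomposition of the regular polygon -/

lemma integral_union {ι : Type*} [Fintype ι] (z : ι → Fin 3 → ℂ)
    (hd : Pairwise (Function.onFun (AEDisjoint volume)
      fun t => convexHull ℝ (Set.range (z t)))) {f : ℂ → ℂ} (hf : Continuous f) :
    ∫ x in ⋃ t, convexHull ℝ (Set.range (z t)), f x =
      ∑ t, ∫ x in convexHull ℝ (Set.range (z t)), f x := by
  have hc : ∀ t, IsCompact (convexHull ℝ (Set.range (z t))) := fun t =>
    (Set.finite_range (z t)).isCompact_convexHull ℝ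
  rw [integral_iUnion_ae (fun t => (hc t).measurableSet.nullMeasurableSet) hd
    (hf.continuousOn.integrableOn_compact (isCompact_iUnion hc)), tsum_fintype]

lemma aedisjoint_of_interior {s t : Set ℂ} (hs : Convex ℝ s) (ht : Convex ℝ t)
    (hsc : IsClosed s) (htc : IsClosed t)
    (h : Disjoint (interior s) (interior t)) : AEDisjoint volume s t := by
  have h1 := hs.addHaar_frontier volume
  have h2 := ht.addHaar_frontier volume
  refine measure_mono_null ?_ (measure_union_null h1 h2)
  rintro x ⟨hxs, hxt⟩
  rw [hsc.frontier_eq, htc.frontier_eq]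
  by_cases hx : x ∈ interior s
  · exact Or.inr ⟨hxt, fun h' => Set.disjoint_left.1 h hx h'⟩
  · exact Or.inl ⟨hxs, hx⟩

/-- The primitive `N`-th root of unity whose powers are the vertices of the regular `N`-gon. -/
def zeta (N : ℕ) : ℂ := Complex.exp ((2 * π / N : ℝ) * Complex.I)

lemma zeta_pow (N j : ℕ) : zeta N ^ j = Complex.exp ((2 * π * j / N : ℝ) * Complex.I) := by
  rw [zeta, ← Complex.exp_nat_mul]; congr 1; push_cast; ring

lemma zeta_pow_self {N : ℕ} (hN : N ≠ 0) : zeta N ^ N = 1 := by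
  rw [zeta_pow, Complex.exp_eq_one_iff]
  refine ⟨1, ?_⟩
  have : (N : ℂ) ≠ 0 := by exact_mod_cast hN
  push_cast; field_simp

/-- The triangle spanned by the center and the `j`-th side of the regular `N`-gon. -/
def fan (N j : ℕ) : Fin 3 → ℂ := ![0, zeta N ^ j, zeta N ^ (j + 1)]

/-- The regular `N`-gon in the complex plane. -/
def gon (N : ℕ) : Set ℂ := convexHull ℝ (Set.range fun j : Fin N => zeta N ^ (j : ℕ))

lemma norm_zeta_pow (N j : ℕ) : ‖zeta N ^ j‖ = 1 := by
  rw [zeta_pow, Complex.norm_exp_ofReal_mul_I]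

lemma cr_zeta (N i j : ℕ) : cr (zeta N ^ i) (zeta N ^ j) = Real.sin (2 * π / N * (j - i)) := by
  rw [cr, zeta_pow, zeta_pow]
  simp only [Complex.exp_ofReal_mul_I_re, Complex.exp_ofReal_mul_I_im]
  rw [mul_sub, Real.sin_sub]
  have e : ∀ j : ℕ, 2 * π / N * j = 2 * π * j / N := fun j => by ring
  rw [e, e]; ring

lemma zeta_mem_gon {N : ℕ} (hN : 0 < N) (j : ℕ) : zeta N ^ j ∈ gon N := by
  apply subset_convexHull
  refine ⟨⟨j % N, Nat.mod_lt _ hN⟩, ?_⟩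
  simp only
  conv_rhs => rw [← Nat.div_add_mod j N, pow_add, pow_mul, zeta_pow_self hN.ne', one_pow, one_mul]

lemma zeta_primitive {N : ℕ} (hN : N ≠ 0) : IsPrimitiveRoot (zeta N) N := by
  have := Complex.isPrimitiveRoot_exp N hN
  convert this using 1
  rw [zeta]; congr 1; push_cast; ring

lemma zero_mem_gon {N : ℕ} (hN : 1 < N) : (0 : ℂ) ∈ gon N := by
  have h := (zeta_primitive (by omega : N ≠ 0)).geom_sum_eq_zero hN
  have hN0 : (N : ℝ) ≠ 0 := by positivity
  have h2 : ∑ j ∈ Finset.range N, (1 / N : ℝ) • zeta N ^ j ∈ gon N := by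
    apply (convex_convexHull ℝ _).sum_mem
    · intro i _; positivity
    · simp [hN0]
    · intro i _; exact zeta_mem_gon (by omega) i
  rwa [← Finset.smul_sum, h, smul_zero] at h2

lemma mem_fan_iff {N j : ℕ} {x : ℂ} : x ∈ convexHull ℝ (Set.range (fan N j)) ↔
    ∃ s t : ℝ, 0 ≤ s ∧ 0 ≤ t ∧ s + t ≤ 1 ∧ x = s * zeta N ^ j + t * zeta N ^ (j + 1) := by
  rw [mem_tri_iff]
  constructor
  · rintro ⟨p, ⟨h1, h2, h3⟩, rfl⟩
    exact ⟨p.1, p.2, h1, h2, h3, by simp [fan]⟩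
  · rintro ⟨s, t, h1, h2, h3, rfl⟩
    exact ⟨(s, t), ⟨h1, h2, h3⟩, by simp [fan]⟩

lemma fan_subset {N : ℕ} (hN : 1 < N) (j : ℕ) : convexHull ℝ (Set.range (fan N j)) ⊆ gon N := by
  apply convexHull_min _ (convex_convexHull ℝ _)
  rintro _ ⟨i, rfl⟩
  fin_cases i
  · exact zero_mem_gon hN
  · exact zeta_mem_gon (by omega) _
  · exact zeta_mem_gon (by omega) _

lemma cos_odd_mul_le {N : ℕ} (hN : 0 < N) (n : ℤ) (h1 : -N < n) (h2 : n < N) :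
    Real.cos ((2 * n - 1) * (π / N)) ≤ Real.cos (π / N) := by
  have hN' : (0 : ℝ) < N := by exact_mod_cast hN
  have hp := Real.pi_pos
  have ha : (N : ℝ) * (π / N) = π := by field_simp
  have hapos : 0 < π / N := by positivity
  set a := π / N with ha'
  have h1' : -(N : ℝ) + 1 ≤ n := by exact_mod_cast (by omega : -(N : ℤ) + 1 ≤ n)
  have h2' : (n : ℝ) + 1 ≤ N := by exact_mod_cast (by omega : (n : ℤ) + 1 ≤ N)
  have hodd : 1 ≤ |2 * (n : ℝ) - 1| := by
    rcases le_or_gt n 0 with h | h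
    · have : (n : ℝ) ≤ 0 := by exact_mod_cast h
      rw [abs_of_neg (by linarith)]; linarith
    · have : (1 : ℝ) ≤ n := by exact_mod_cast h
      rw [abs_of_pos (by linarith)]; linarith
  have hup : |2 * (n : ℝ) - 1| ≤ 2 * N - 1 := by rw [abs_le]; constructor <;> linarith
  rw [← Real.cos_abs, abs_mul, abs_of_pos hapos]
  set y := |2 * (n : ℝ) - 1|
  rcases le_total (y * a) π with h | h
  · apply Real.cos_le_cos_of_nonneg_of_le_pi hapos.le h
    nlinarith
  · rw [← Real.cos_two_pi_sub (y * a)]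
    apply Real.cos_le_cos_of_nonneg_of_le_pi hapos.le
    · linarith
    · nlinarith

/-- The `N`-gon lies on the inner side of the line through its `j`-th side. The normal vector is taken to
be the sum of the two end points of the side. -/
lemma gon_halfplane {N : ℕ} (hN : 0 < N) {j : ℕ} (hj : j < N) {x : ℂ} (hx : x ∈ gon N) :
    (x * (starRingEnd ℂ) (zeta N ^ j + zeta N ^ (j + 1))).re ≤ 1 + Real.cos (2 * π / N) := by
  have hconv : Convex ℝ {x : ℂ | (x * (starRingEnd ℂ) (zeta N ^ j + zeta N ^ (j + 1))).re
      ≤ 1 + Real.cos (2 * π / N)} := by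
    apply convex_halfSpace_le
    constructor
    · intro x y; rw [add_mul, Complex.add_re]
    · intro c x; simp; ring
  refine convexHull_min ?_ hconv hx
  rintro _ ⟨l, rfl⟩
  simp only [Set.mem_ofPred_eq]
  have hN' : (N : ℝ) ≠ 0 := by positivity
  have e : (zeta N ^ (l : ℕ) * (starRingEnd ℂ) (zeta N ^ j + zeta N ^ (j + 1))).re =
      2 * Real.cos (π / N) * Real.cos ((2 * (((l : ℕ) : ℤ) - (j : ℤ) : ℤ) - 1) * (π / N)) := by
    rw [zeta_pow, zeta_pow, zeta_pow]
    simp only [map_add, mul_add, Complex.add_re, Complex.mul_re, Complex.conj_re, Complex.conj_im,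
      Complex.exp_ofReal_mul_I_re, Complex.exp_ofReal_mul_I_im]
    push_cast
    have h1 : (2 * ((l : ℕ) - (j : ℝ)) - 1) * (π / N) + π / N =
        2 * π * (l : ℕ) / N - 2 * π * j / N := by field_simp; ring
    have h2 : (2 * ((l : ℕ) - (j : ℝ)) - 1) * (π / N) - π / N =
        2 * π * (l : ℕ) / N - 2 * π * (j + 1) / N := by field_simp; ring
    have h3 := Real.two_mul_cos_mul_cos ((2 * ((l : ℕ) - (j : ℝ)) - 1) * (π / N)) (π / N)
    rw [h1, h2, Real.cos_sub, Real.cos_sub] at h3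
    linarith
  rw [e]
  have h4 := cos_odd_mul_le hN (((l : ℕ) : ℤ) - (j : ℤ)) (by omega) (by omega)
  have h5 : 2 * π / N = 2 * (π / N) := by ring
  rw [h5, Real.cos_two_mul]
  rcases eq_or_ne N 1 with h | h
  · subst h
    have := Real.neg_one_le_cos ((2 * ((((l : ℕ) : ℤ) - (j : ℤ) : ℤ) : ℝ) - 1) * (π / (1 : ℕ)))
    simp at this ⊢
    linarith
  have h6 : 0 ≤ Real.cos (π / N) := by
    apply Real.cos_nonneg_of_neg_pi_div_two_le_of_le
    · have := Real.pi_pos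
      have : 0 ≤ π / N := by positivity
      linarith
    · apply div_le_div_of_nonneg_left Real.pi_pos.le (by norm_num)
      exact_mod_cast (by omega : 2 ≤ N)
  nlinarith

lemma sub_fan {N : ℕ} (hN : 2 < N) : gon N ⊆ ⋃ j : Fin N, convexHull ℝ (Set.range (fan N j)) := by
  intro x hx
  have hN' : (0 : ℝ) < N := by positivity
  have hpi := Real.pi_pos
  set a := 2 * π / N with ha
  have hapos : 0 < a := by positivity
  have hNa : N * a = 2 * π := by rw [ha]; field_simp
  have ha_lt : a < π := by
    have : (3 : ℝ) ≤ N := by exact_mod_cast hN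
    nlinarith
  have hsin : 0 < Real.sin a := Real.sin_pos_of_pos_of_lt_pi hapos ha_lt
  have hcos : -1 < Real.cos a := by
    rw [← Real.cos_pi]
    exact Real.cos_lt_cos_of_nonneg_of_le_pi hapos.le le_rfl ha_lt
  -- a polar representation with angle in `[0, 2π)`
  obtain ⟨θ, hθ0, hθ1, hθ⟩ : ∃ θ : ℝ, 0 ≤ θ ∧ θ < 2 * π ∧
      x = ‖x‖ * Complex.exp (θ * Complex.I) := by
    have h1 := Complex.neg_pi_lt_arg x
    have h2 := Complex.arg_le_pi x
    rcases le_or_gt 0 x.arg with h | h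
    · exact ⟨x.arg, h, by linarith, (Complex.norm_mul_exp_arg_mul_I x).symm⟩
    · refine ⟨x.arg + 2 * π, by linarith, by linarith, ?_⟩
      push_cast
      rw [add_mul, Complex.exp_add, Complex.exp_two_pi_mul_I, mul_one,
        Complex.norm_mul_exp_arg_mul_I x]
  set j := ⌊θ / a⌋₊ with hj
  have hj1 : j * a ≤ θ := by
    rw [← le_div_iff₀ hapos]; exact Nat.floor_le (by positivity)
  have hj2 : θ < (j + 1) * a := by
    rw [← div_lt_iff₀ hapos]; exact Nat.lt_floor_add_one _
  have hjN : j < N := by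
    have : (j : ℝ) < N := by
      by_contra! hcon
      nlinarith
    exact_mod_cast this
  refine Set.mem_iUnion.2 ⟨⟨j, hjN⟩, ?_⟩
  rw [mem_fan_iff]
  set s := ‖x‖ * Real.sin ((j + 1) * a - θ) / Real.sin a with hs
  set t := ‖x‖ * Real.sin (θ - j * a) / Real.sin a with ht
  have hs0 : 0 ≤ s := by
    have := Real.sin_nonneg_of_nonneg_of_le_pi (x := (j + 1) * a - θ) (by linarith) (by linarith)
    positivity
  have ht0 : 0 ≤ t := by
    have := Real.sin_nonneg_of_nonneg_of_le_pi (x := θ - j * a) (by linarith) (by linarith)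
    positivity
  have hxe : x = s * zeta N ^ j + t * zeta N ^ (j + 1) := by
    have hr : ‖x‖ * (Real.sin a * Real.cos θ) = ‖x‖ * Real.sin ((j + 1) * a - θ) * Real.cos (j * a) +
        ‖x‖ * Real.sin (θ - j * a) * Real.cos ((j + 1) * a) := by
      have : Real.sin a = Real.sin ((j + 1) * a) * Real.cos (j * a) -
          Real.cos ((j + 1) * a) * Real.sin (j * a) := by rw [← Real.sin_sub]; congr 1; ring
      rw [this, Real.sin_sub, Real.sin_sub]; ring
    have hi : ‖x‖ * (Real.sin a * Real.sin θ) = ‖x‖ * Real.sin ((j + 1) * a - θ) * Real.sin (j * a) +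
        ‖x‖ * Real.sin (θ - j * a) * Real.sin ((j + 1) * a) := by
      have : Real.sin a = Real.sin ((j + 1) * a) * Real.cos (j * a) -
          Real.cos ((j + 1) * a) * Real.sin (j * a) := by rw [← Real.sin_sub]; congr 1; ring
      rw [this, Real.sin_sub, Real.sin_sub]; ring
    have e1 : 2 * π * (j : ℝ) / N = j * a := by rw [ha]; ring
    have e2 : 2 * π * ((j + 1 : ℕ) : ℝ) / N = (j + 1) * a := by rw [ha]; push_cast; ring
    rw [zeta_pow, zeta_pow, e1, e2]
    apply Complex.ext
    · conv_lhs => rw [hθ]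
      rw [Complex.add_re, Complex.re_ofReal_mul, Complex.re_ofReal_mul, Complex.re_ofReal_mul]
      simp only [Complex.exp_ofReal_mul_I_re]
      rw [hs, ht]; field_simp; linarith
    · conv_lhs => rw [hθ]
      rw [Complex.add_im, Complex.im_ofReal_mul, Complex.im_ofReal_mul, Complex.im_ofReal_mul]
      simp only [Complex.exp_ofReal_mul_I_im]
      rw [hs, ht]; field_simp; linarith
  refine ⟨s, t, hs0, ht0, ?_, hxe⟩
  have h1 := gon_halfplane (by omega) hjN hx
  have h2 : (x * (starRingEnd ℂ) (zeta N ^ j + zeta N ^ (j + 1))).re =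
      (s + t) * (1 + Real.cos a) := by
    rw [hxe, pow_succ]
    have hn : (starRingEnd ℂ) (zeta N ^ j) * zeta N ^ j = 1 := conj_mul_self_of_norm (norm_zeta_pow N j)
    have hn1 : (starRingEnd ℂ) (zeta N) * zeta N = 1 := by
      have := conj_mul_self_of_norm (norm_zeta_pow N 1); rwa [pow_one] at this
    have e : ((s : ℂ) * zeta N ^ j + t * (zeta N ^ j * zeta N)) *
        (starRingEnd ℂ) (zeta N ^ j + zeta N ^ j * zeta N) =
        (s + t : ℝ) + s * (starRingEnd ℂ) (zeta N) + t * zeta N := by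
      simp only [map_add, map_mul]
      push_cast
      generalize (starRingEnd ℂ) (zeta N) = c at *
      linear_combination (s + t * zeta N + (s + t * zeta N) * c) * hn + t * hn1
    have hre : (zeta N).re = Real.cos a := by
      rw [zeta, Complex.exp_ofReal_mul_I_re]
    rw [e, Complex.add_re, Complex.add_re, Complex.re_ofReal_mul, Complex.re_ofReal_mul,
      Complex.conj_re, hre, Complex.ofReal_re]
    ring
  rw [h2] at h1
  nlinarith

lemma iUnion_fan {N : ℕ} (hN : 2 < N) :
    ⋃ j : Fin N, convexHull ℝ (Set.range (fan N j)) = gon N :=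
  Set.Subset.antisymm (Set.iUnion_subset fun j => fan_subset (by omega) j) (sub_fan hN)

lemma null_line (v : ℂ) : volume {x : ℂ | ∃ r : ℝ, x = r * v} = 0 := by
  have h := Measure.addHaar_submodule (volume : Measure ℂ) (Submodule.span ℝ {v}) (by
    intro h
    have h1 := finrank_span_le_card (R := ℝ) ({v} : Set ℂ)
    rw [h, finrank_top, Complex.finrank_real_complex] at h1
    simp at h1)
  refine measure_mono_null ?_ h
  rintro x ⟨r, rfl⟩
  exact Submodule.mem_span_singleton.2 ⟨r, by simp⟩

/-- Two different fan triangles meet only along the rays bounding the first one: the cross products of a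
common point with the two bounding vectors would otherwise have contradictory signs. -/
lemma fan_inter {N : ℕ} (hN : 2 < N) {i j : ℕ} (hij : i < j) (hj : j < N) :
    AEDisjoint volume (convexHull ℝ (Set.range (fan N i))) (convexHull ℝ (Set.range (fan N j))) := by
  refine measure_mono_null ?_ (measure_union_null (null_line (zeta N ^ i))
    (null_line (zeta N ^ (i + 1))))
  rintro x ⟨hx1, hx2⟩
  obtain ⟨s, t, hs, ht, -, h1⟩ := mem_fan_iff.1 hx1
  obtain ⟨s', t', hs', ht', -, h2⟩ := mem_fan_iff.1 hx2
  by_contra hcon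
  have hs0 : s ≠ 0 := by
    rintro rfl; exact hcon (Or.inr ⟨t, by simpa using h1⟩)
  have ht0 : t ≠ 0 := by
    rintro rfl; exact hcon (Or.inl ⟨s, by simpa using h1⟩)
  have hs1 : 0 < s := lt_of_le_of_ne hs hs0.symm
  have ht1 : 0 < t := lt_of_le_of_ne ht ht0.symm
  have hN' : (0 : ℝ) < N := by positivity
  have hpi := Real.pi_pos
  have lin : ∀ (u p q : ℂ) (a b : ℝ), cr u (a * p + b * q) = a * cr u p + b * cr u q := by
    intro u p q a b; simp [cr]; ring
  have c1 : cr (zeta N ^ i) x = cr (zeta N ^ i) x := rfl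
  have c2 : cr (zeta N ^ (i + 1)) x = cr (zeta N ^ (i + 1)) x := rfl
  conv_lhs at c1 => rw [h1]
  conv_rhs at c1 => rw [h2]
  conv_lhs at c2 => rw [h1]
  conv_rhs at c2 => rw [h2]
  rw [lin, lin] at c1 c2
  simp only [cr_zeta] at c1 c2
  push_cast at c1 c2
  set a := 2 * π / N with ha
  have hapos : 0 < a := by positivity
  have hNa : N * a = 2 * π := by rw [ha]; field_simp
  have ha_lt : a < π := by
    have : (3 : ℝ) ≤ N := by exact_mod_cast hN
    nlinarith
  have hsin : 0 < Real.sin a := Real.sin_pos_of_pos_of_lt_pi hapos ha_lt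
  have hn1 : (i : ℝ) + 1 ≤ j := by exact_mod_cast hij
  have hn2 : (j : ℝ) + 1 ≤ N := by exact_mod_cast hj
  have hi0 : (0 : ℝ) ≤ i := by positivity
  have e0 : a * ((i : ℝ) - i) = 0 := by ring
  have e1 : a * ((i : ℝ) + 1 - i) = a := by ring
  have e2 : a * ((i : ℝ) - (i + 1)) = -a := by ring
  have e3 : a * ((i : ℝ) + 1 - (i + 1)) = 0 := by ring
  rw [e0, e1, Real.sin_zero] at c1
  rw [e2, e3, Real.sin_zero, Real.sin_neg] at c2
  have hts := mul_pos ht1 hsin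
  have hss := mul_pos hs1 hsin
  rcases le_total (a * ((j : ℝ) - i)) π with h | h
  · have q1 := Real.sin_nonneg_of_nonneg_of_le_pi (x := a * ((j : ℝ) - (i + 1)))
      (mul_nonneg hapos.le (by linarith)) (by nlinarith)
    have q2 := Real.sin_nonneg_of_nonneg_of_le_pi (x := a * ((j : ℝ) + 1 - (i + 1)))
      (mul_nonneg hapos.le (by linarith)) (by nlinarith)
    have := mul_nonneg hs' q1
    have := mul_nonneg ht' q2
    linarith
  · have neg : ∀ y, π ≤ y → y ≤ 2 * π → Real.sin y ≤ 0 := by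
      intro y h1 h2
      rw [← Real.sin_sub_two_pi]
      exact Real.sin_nonpos_of_nonpos_of_neg_pi_le (by linarith) (by linarith)
    have q1 := neg (a * ((j : ℝ) - i)) h (by nlinarith)
    have q2 := neg (a * ((j : ℝ) + 1 - i)) (by nlinarith) (by nlinarith)
    have := mul_nonpos_of_nonneg_of_nonpos hs' q1
    have := mul_nonpos_of_nonneg_of_nonpos ht' q2
    linarith

/-! ### Sign conditions from a tiling -/

/-- All sides of a fan triangle have directions which are `2N`-th roots of unity; its conjugated signed
area (doubled) is `sin (2πk/N)`. -/
lemma Conj.fan_term {M k N : ℕ} {F : ℂ →+ ℂ} (hF : Conj M k F) (hN : 2 < N) (hM : 2 * N ∣ M)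
    (j : ℕ) :
    orient (fan N j) * ∑ i, (edgeFn M F (fan N j (i + 1)) (tau (fan N j (i + 1) - fan N j i)) -
      edgeFn M F (fan N j i) (tau (fan N j (i + 1) - fan N j i))) = Real.sin (2 * π / N * k) ∧
    cr (fan N j 1 - fan N j 0) (fan N j 2 - fan N j 0) ≠ 0 := by
  have hN' : (0 : ℝ) < N := by positivity
  have hpi := Real.pi_pos
  have hapos : 0 < 2 * π / N := by positivity
  have hNa : N * (2 * π / N) = 2 * π := by field_simp
  have ha_lt : 2 * π / N < π := by
    have : (3 : ℝ) ≤ N := by exact_mod_cast hN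
    nlinarith
  have hsin : 0 < Real.sin (2 * π / N) := Real.sin_pos_of_pos_of_lt_pi hapos ha_lt
  have hcr : cr (fan N j 1 - fan N j 0) (fan N j 2 - fan N j 0) = Real.sin (2 * π / N) := by
    simp only [fan, Matrix.cons_val_zero, Matrix.cons_val_one, Matrix.cons_val, sub_zero]
    rw [cr_zeta]; congr 1; push_cast; ring
  refine ⟨?_, by rw [hcr]; exact hsin.ne'⟩
  have ho : orient (fan N j) = 1 := by rw [orient, hcr, Real.sign_of_pos hsin]
  obtain ⟨q, rfl⟩ := hM
  have hroot : zeta N ^ (2 * N * q) = 1 := by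
    rw [mul_comm 2 N, mul_assoc, pow_mul, zeta_pow_self (by omega), one_pow]
  have hz0 : ∀ j, zeta N ^ j ≠ 0 := fun j h => by
    have := norm_zeta_pow N j; rw [h] at this; simp at this
  have hconj : ∀ j, (starRingEnd ℂ) (zeta N ^ j) = (zeta N ^ j)⁻¹ := fun j =>
    eq_inv_of_mul_eq_one_left (conj_mul_self_of_norm (norm_zeta_pow N j))
  have hFz : ∀ j, F (zeta N ^ j) = zeta N ^ (j * k) := by
    intro j
    rw [hF.root, ← pow_mul]
    rw [← pow_mul, mul_comm, pow_mul, hroot, one_pow]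
  have ht1 : ∀ j, tau (zeta N ^ j) = zeta N ^ (2 * j) := by
    intro j; rw [tau, hconj, div_inv_eq_mul, ← pow_add, two_mul]
  have hne : zeta N ^ (j + 1) - zeta N ^ j ≠ 0 := by
    intro h
    have := cr_zeta N j (j + 1)
    rw [sub_eq_zero.1 h] at this
    have e : cr (zeta N ^ j) (zeta N ^ j) = 0 := by simp [cr]; ring
    rw [e] at this
    have e2 : 2 * π / N * (((j + 1 : ℕ) : ℝ) - j) = 2 * π / N := by push_cast; ring
    rw [e2] at this
    linarith
  have ht2 : tau (zeta N ^ (j + 1) - zeta N ^ j) = - zeta N ^ (2 * j + 1) := by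
    have h0 := hz0 1
    rw [pow_one] at h0
    have hc : (starRingEnd ℂ) (zeta N ^ (j + 1) - zeta N ^ j) ≠ 0 := by
      rw [Ne, map_eq_zero]; exact hne
    rw [tau, div_eq_iff hc, map_sub, hconj, hconj]
    have hj := hz0 j
    field_simp
    ring
  have hr1 : ∀ j, tau (zeta N ^ j) ^ (2 * N * q) = 1 := by
    intro j; rw [ht1, ← pow_mul, mul_comm, pow_mul, hroot, one_pow]
  have hr2 : tau (zeta N ^ (j + 1) - zeta N ^ j) ^ (2 * N * q) = 1 := by
    rw [ht2, Even.neg_pow ⟨N * q, by ring⟩, ← pow_mul, mul_comm, pow_mul, hroot, one_pow]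
  have s0 := edgeFn_sub hF (A := 0) (B := zeta N ^ j) (by simpa using hz0 j)
    (by simpa using hr1 j)
  have s1 := edgeFn_sub hF hne hr2
  have s2 := edgeFn_sub hF (A := zeta N ^ (j + 1)) (B := 0) (by simpa using hz0 (j + 1))
    (by rw [zero_sub, tau_neg]; exact hr1 _)
  rw [ho, one_mul, Fin.sum_univ_three]
  simp only [zero_add, show (2 : Fin 3) + 1 = 0 from rfl, show (1 : Fin 3) + 1 = 2 from rfl]
  have f0 : fan N j 0 = 0 := rfl
  have f1 : fan N j 1 = zeta N ^ j := rfl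
  have f2 : fan N j 2 = zeta N ^ (j + 1) := rfl
  rw [f0, f1, f2, s0, s1, s2, map_zero, hFz, hFz, cr_zeta]
  have c0 : ∀ x, cr 0 x = 0 := fun x => by simp [cr]
  have c1 : ∀ x, cr x 0 = 0 := fun x => by simp [cr]
  rw [c0, c1, zero_add, add_zero]
  congr 1; push_cast; ring

/-- Comparison of the conjugated signed areas of the tiles with those of the fan triangles. -/
theorem complex_tiling {N : ℕ} (hN : 2 < N) {m : ℕ} (z : Fin m → Fin 3 → ℂ)
    (hz : ∀ t, cr (z t 1 - z t 0) (z t 2 - z t 0) ≠ 0)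
    (hd : Pairwise fun t s => Disjoint (interior (convexHull ℝ (Set.range (z t))))
      (interior (convexHull ℝ (Set.range (z s)))))
    (hU : ⋃ t, convexHull ℝ (Set.range (z t)) = gon N)
    {α β γ : ℝ} (hsum : α + β + γ = π)
    (h0 : ∀ t, InnerProductGeometry.angle (z t 1 - z t 0) (z t 2 - z t 0) = α)
    (h1 : ∀ t, InnerProductGeometry.angle (z t 2 - z t 1) (z t 0 - z t 1) = β)
    (h2 : ∀ t, InnerProductGeometry.angle (z t 0 - z t 2) (z t 1 - z t 2) = γ)
    {M k : ℕ} (hM0 : 0 < M) (hM : 2 * N ∣ M) (hk : k.Coprime M)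
    (hα : ∃ n : ℤ, M * α = n * π) (hβ : ∃ n : ℤ, M * β = n * π) (hγ : ∃ n : ℤ, M * γ = n * π) :
    0 ≤ Real.sin (2 * π / N * k) *
      (Real.sin (k * α) * Real.sin (k * β) * Real.sin (k * γ)) := by
  obtain ⟨F, hF⟩ := exists_conj M k hM0 hk
  have hkodd : Odd k := by
    have h2 : 2 ∣ M := (Dvd.intro _ rfl).trans hM
    exact (Nat.coprime_two_right.1 (hk.coprime_dvd_right h2))
  have hch := edge_sum_eq_zero (ι := Fin m ⊕ Fin N) (Sum.elim z (fun j : Fin N => fan N j))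
    (Sum.elim (fun _ => 1) (fun _ => -1)) ?_ ?_ (fun v d => (edgeFn M F v d : ℂ))
  rotate_left
  · rintro (t | j)
    · exact hz t
    · exact (hF.fan_term hN hM j).2
  · intro f hf
    rw [Fintype.sum_sum_type]
    simp only [Sum.elim_inl, Sum.elim_inr, one_mul, neg_one_mul, Finset.sum_neg_distrib]
    have hcl : ∀ t, IsClosed (convexHull ℝ (Set.range (z t))) := fun t =>
      ((Set.finite_range (z t)).isCompact_convexHull ℝ).isClosed
    have i1 := integral_union z (fun t s hts => aedisjoint_of_interior (convex_convexHull ℝ _)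
      (convex_convexHull ℝ _) (hcl t) (hcl s) (hd hts)) hf
    have i2 := integral_union (fun j : Fin N => fan N j) (by
      intro i j hij
      rcases lt_or_gt_of_ne (Fin.val_ne_of_ne hij) with h | h
      · exact fan_inter hN h j.2
      · exact (fan_inter hN h i.2).symm) hf
    rw [← i1, ← i2, hU, iUnion_fan hN, add_neg_cancel]
  rw [Fintype.sum_sum_type] at hch
  simp only [Sum.elim_inl, Sum.elim_inr, one_mul, neg_one_mul, Finset.sum_neg_distrib] at hch
  have hch' : ∑ t, orient (z t) * ∑ i, (edgeFn M F (z t (i + 1)) (tau (z t (i + 1) - z t i)) -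
      edgeFn M F (z t i) (tau (z t (i + 1) - z t i))) =
      ∑ j : Fin N, orient (fan N j) * ∑ i, (edgeFn M F (fan N j (i + 1))
        (tau (fan N j (i + 1) - fan N j i)) -
      edgeFn M F (fan N j i) (tau (fan N j (i + 1) - fan N j i))) := by
    have := add_neg_eq_zero.1 hch
    exact_mod_cast this
  simp only [fun j : Fin N => (hF.fan_term hN hM j).1] at hch'
  rw [Finset.sum_const, Finset.card_univ, Fintype.card_fin, nsmul_eq_mul] at hch'
  have hN' : (0 : ℝ) < N := by positivity
  refine nonneg_of_mul_nonneg_right (a := (N : ℝ)) ?_ hN'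
  rw [← mul_assoc, ← hch', Finset.sum_mul]
  exact Finset.sum_nonneg fun t _ => tile_sign hF hkodd (z t) (hz t) hsum (h0 t) (h1 t) (h2 t)
    hα hβ hγ

/-- The isometric identification of the Euclidean plane with `ℂ`. -/
def toC : Pt ≃ₗᵢ[ℝ] ℂ := Complex.orthonormalBasisOneI.repr.symm

lemma toC_vertex (N j : ℕ) : toC (ngonVertex N j) = zeta N ^ j := by
  rw [toC, Complex.orthonormalBasisOneI_repr_symm_apply, zeta_pow, ngonVertex]
  generalize 2 * π * (j : ℝ) / N = θ
  apply Complex.ext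
  · rw [Complex.exp_ofReal_mul_I_re]; simp; rfl
  · rw [Complex.exp_ofReal_mul_I_im]; simp; rfl

lemma toC_hull {ι : Type*} (T : ι → Pt) :
    convexHull ℝ (Set.range fun i => toC (T i)) = toC '' convexHull ℝ (Set.range T) := by
  have h := toC.toLinearEquiv.toLinearMap.image_convexHull (Set.range T)
  rw [← Set.range_comp] at h
  exact h.symm

lemma toC_angle (A B C : Pt) :
    InnerProductGeometry.angle (toC A - toC B) (toC C - toC B) = EuclideanGeometry.angle A B C := by
  rw [← map_sub, ← map_sub, EuclideanGeometry.angle]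
  exact toC.toLinearIsometry.angle_map _ _

lemma cr_ne_zero {x y : ℂ} {α : ℝ} (hx : x ≠ 0) (hy : y ≠ 0)
    (h : InnerProductGeometry.angle x y = α) (h0 : 0 < α) (h1 : α < π) : cr x y ≠ 0 := by
  intro hc
  have hs := InnerProductGeometry.sin_angle_mul_norm_mul_norm x y
  have e : inner ℝ x x * inner ℝ y y - inner ℝ x y * inner ℝ x y = cr x y ^ 2 := by
    rw [real_inner_self_eq_norm_sq, real_inner_self_eq_norm_sq, ← Complex.normSq_eq_norm_sq,
      ← Complex.normSq_eq_norm_sq, Complex.normSq_apply, Complex.normSq_apply]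
    simp [Complex.inner, cr]; ring
  rw [e, hc, h] at hs
  have := Real.sin_pos_of_pos_of_lt_pi h0 h1
  have hx' := norm_pos_iff.2 hx
  have hy' := norm_pos_iff.2 hy
  have : 0 < Real.sin α * (‖x‖ * ‖y‖) := by positivity
  simp at hs
  rcases hs with h | h | h
  · linarith
  · exact hx h
  · exact hy h

theorem plane_tiling {N : ℕ} (hN : 2 < N) {m : ℕ} (T : Fin m → Fin 3 → Pt) (htile : IsTiling N T)
    {α β γ : ℝ} (hα0 : 0 < α) (hβ0 : 0 < β) (hγ0 : 0 < γ) (hsum : α + β + γ = π)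
    (hang : ∀ t, HasAngles (T t) α β γ)
    {M k : ℕ} (hM0 : 0 < M) (hM : 2 * N ∣ M) (hk : k.Coprime M)
    (hα : ∃ n : ℤ, M * α = n * π) (hβ : ∃ n : ℤ, M * β = n * π) (hγ : ∃ n : ℤ, M * γ = n * π) :
    0 ≤ Real.sin (2 * π / N * k) *
      (Real.sin (k * α) * Real.sin (k * β) * Real.sin (k * γ)) := by
  obtain ⟨hind, hdis, hun⟩ := htile
  have a0 : ∀ t, InnerProductGeometry.angle (toC (T t 1) - toC (T t 0)) (toC (T t 2) - toC (T t 0))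
      = α := fun t => by rw [toC_angle]; exact (hang t).1
  refine complex_tiling hN (fun t i => toC (T t i)) ?_ ?_ ?_ hsum a0 ?_ ?_ hM0 hM hk hα hβ hγ
  · intro t
    refine cr_ne_zero ?_ ?_ (a0 t) hα0 (by linarith)
    · rw [sub_ne_zero]; exact fun h => by simpa using (hind t).injective (toC.injective h)
    · rw [sub_ne_zero]; exact fun h => by simpa using (hind t).injective (toC.injective h)
  · intro t s hts
    have hi : ∀ S : Set Pt, interior (toC '' S) = toC '' interior S := fun S =>
      (toC.toHomeomorph.image_interior S).symm
    simp only [toC_hull, hi]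
    exact (Set.disjoint_image_iff toC.injective).2 (hdis hts)
  · simp only [toC_hull]
    rw [← Set.image_iUnion]
    have : (⋃ t, convexHull ℝ (Set.range (T t))) = ngon N := hun
    rw [this, ngon, ← toC_hull, gon]
    simp only [toC_vertex]
  · intro t; rw [toC_angle]; exact (hang t).2.1
  · intro t; rw [toC_angle]; exact (hang t).2.2

/-! ### Rational angles -/

lemma cos_lt_of_far {r f : ℝ} (hr : 0 ≤ r) (h1 : r < |f|) (h2 : |f| < 1 - r) :
    Real.cos (2 * π * f) < Real.cos (2 * π * r) := by
  have hpi := Real.pi_pos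
  rw [← Real.cos_abs, abs_mul, abs_of_pos (by positivity : 0 < 2 * π)]
  rcases le_total |f| (1 / 2) with h | h
  · exact Real.cos_lt_cos_of_nonneg_of_le_pi (by positivity) (by nlinarith) (by nlinarith)
  · rw [← Real.cos_two_pi_sub (2 * π * |f|)]
    exact Real.cos_lt_cos_of_nonneg_of_le_pi (by positivity) (by nlinarith) (by nlinarith)

/-- If `p` does not divide `x`, some `k ≡ 1` modulo `L` is a unit modulo `p * L` and moves `x / p`
to within `[1/3, 1/2]` of an integer in absolute value. For odd `p` there are two candidates,
`j` and `p - j`, at least one of which gives a unit, since the two values of `k` add up to `2`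
modulo `p`. -/
lemma exists_multiplier {p L : ℕ} (hp : p.Prime) (hL : 2 ∣ L) {x : ℤ} (hx : ¬ (p : ℤ) ∣ x) :
    ∃ j : ℕ, (1 + j * L).Coprime (p * L) ∧
      ∃ w : ℤ, 1 / 3 ≤ |(j * x / p - w : ℝ)| ∧ |(j * x / p - w : ℝ)| ≤ 1 / 2 := by
  have hcop : ∀ j : ℕ, ¬ p ∣ 1 + j * L → (1 + j * L).Coprime (p * L) := by
    intro j hj
    refine Nat.Coprime.mul_right ((Nat.Prime.coprime_iff_not_dvd hp).2 hj).symm ?_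
    simp
  have hp0 : (0 : ℝ) < p := by exact_mod_cast hp.pos
  rcases hp.eq_two_or_odd' with rfl | hodd
  · refine ⟨1, hcop 1 (by omega), x / 2, ?_⟩
    obtain ⟨w, hw⟩ : ∃ w, x = 2 * w + 1 := ⟨x / 2, by push_cast at hx; omega⟩
    have : x / 2 = w := by omega
    rw [this, hw]
    have e : ((1 : ℕ) * ((2 * w + 1 : ℤ) : ℝ) / ((2 : ℕ) : ℝ) - w : ℝ) = 1 / 2 := by
      push_cast; ring
    rw [e]; norm_num [abs_of_pos]
  · have : Fact p.Prime := ⟨hp⟩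
    obtain ⟨h, hh⟩ := hodd
    have hxp : (x : ZMod p) ≠ 0 := by rwa [Ne, ZMod.intCast_zmod_eq_zero_iff_dvd]
    have hp3 : (3 : ℝ) ≤ p := by
      have := hp.two_le; exact_mod_cast (by omega : 3 ≤ p)
    have hhR : (p : ℝ) = 2 * h + 1 := by exact_mod_cast hh
    -- `j₁ x ≡ h` modulo `p`, where `h = (p - 1) / 2`.
    set j₁ : ℕ := ((h : ZMod p) / x).val with hj₁
    have hlt : j₁ < p := ZMod.val_lt _
    have hdvd : (p : ℤ) ∣ j₁ * x - h := by
      rw [← ZMod.intCast_zmod_eq_zero_iff_dvd]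
      push_cast
      rw [hj₁, ZMod.natCast_zmod_val]; field_simp; ring
    obtain ⟨w, hw⟩ := hdvd
    have hwR : (j₁ * x - h : ℝ) = p * w := by exact_mod_cast hw
    have b1 : (1 : ℝ) / 3 ≤ h / p := by rw [div_le_div_iff₀ (by norm_num) hp0]; linarith
    have b2 : (h : ℝ) / p ≤ 1 / 2 := by rw [div_le_div_iff₀ hp0 (by norm_num)]; linarith
    have b0 : (0 : ℝ) ≤ h / p := by positivity
    by_cases hd : p ∣ 1 + j₁ * L
    · refine ⟨p - j₁, hcop _ ?_, x - w, ?_⟩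
      · intro hd2
        have h3 := (Nat.dvd_add hd hd2)
        have e : 1 + j₁ * L + (1 + (p - j₁) * L) = 2 + p * L := by
          obtain ⟨r, hr⟩ := Nat.exists_eq_add_of_lt hlt
          have : p - j₁ = r + 1 := by omega
          rw [this, hr]; ring
        rw [e] at h3
        have h4 := (Nat.dvd_add_left (dvd_mul_right p L)).1 h3
        have := Nat.le_of_dvd (by norm_num) h4
        have := hp.two_le
        omega
      · have e : (((p - j₁ : ℕ) : ℝ) * x / p - ((x - w : ℤ) : ℝ) : ℝ) = -(h / p) := by
          rw [Nat.cast_sub hlt.le]; push_cast; field_simp; linarith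
        rw [e, abs_neg, abs_of_nonneg b0]; exact ⟨b1, b2⟩
    · refine ⟨j₁, hcop _ hd, w, ?_⟩
      have e : ((j₁ : ℝ) * x / p - w : ℝ) = h / p := by field_simp; linarith
      rw [e, abs_of_nonneg b0]; exact ⟨b1, b2⟩

/-- A rational number `e` with `|e| < 1 / N`, none of whose conjugates `k e` is farther from the integers
than the corresponding `k / N`, is zero. -/
theorem eq_zero_of_cos_le {N : ℕ} (hN : 5 < N) {e : ℝ} (he : ∃ q : ℚ, e = q) (hlt : |e| < 1 / N)
    (h : ∀ M k : ℕ, 0 < M → 2 * N ∣ M → (∃ n : ℤ, M * e = n) → k.Coprime M →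
      Real.cos (2 * π * (k / N)) ≤ Real.cos (2 * π * (k * e))) : e = 0 := by
  have hpi := Real.pi_pos
  have hN0 : (0 : ℝ) < N := by positivity
  have hN6 : (6 : ℝ) ≤ N := by exact_mod_cast hN
  have hinv : (1 : ℝ) / N ≤ 1 / 6 := one_div_le_one_div_of_le (by norm_num) hN6
  have hinv0 : (0 : ℝ) < 1 / N := by positivity
  obtain ⟨q, hq⟩ := he
  set r : ℚ := 2 * N * q with hr
  have hre : (r : ℝ) = 2 * N * e := by rw [hr, hq]; push_cast; ring
  have hrd : (r : ℝ) * r.den = r.num := by exact_mod_cast Rat.mul_den_eq_num r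
  by_cases hy : r.den = 1
  · rw [hy, Nat.cast_one, mul_one, hre] at hrd
    have hx2 : |(r.num : ℝ)| < 2 := by
      rw [← hrd, abs_mul, abs_of_pos (by positivity : (0 : ℝ) < 2 * N)]
      calc 2 * N * |e| < 2 * N * (1 / N) := by gcongr
        _ = 2 := by field_simp
    have hx2' : |r.num| < 2 := by exact_mod_cast hx2
    obtain ⟨hx3, hx4⟩ := abs_lt.1 hx2'
    have hcases : r.num = 0 ∨ r.num = 1 ∨ r.num = -1 := by omega
    by_cases hr0 : r.num = 0
    · rw [hr0] at hrd
      simp at hrd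
      rcases hrd with h | h
      · omega
      · exact h
    exfalso
    have hxabs : |(r.num : ℝ)| = 1 := by
      rcases hcases with h | h | h
      · exact absurd h hr0
      · rw [h]; norm_num
      · rw [h]; norm_num
    have hee : e = r.num / (2 * N) := by rw [← hrd]; field_simp
    have hMe : ∃ n : ℤ, ((2 * N : ℕ) : ℝ) * e = n := ⟨r.num, by push_cast; exact hrd⟩
    -- Here `e = ± 1 / (2 N)`; the conjugation by `N + 1` (`N` even) or `N + 2` (`N` odd) rules it out.
    -- The odd case needs `N ≥ 7`.
    rcases Nat.even_or_odd N with hev | hod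
    · have hcop : (N + 1).Coprime (2 * N) := by
        refine Nat.Coprime.mul_right (Nat.coprime_two_right.2 hev.add_one) ?_
        simp
      have h1 := h (2 * N) (N + 1) (by omega) dvd_rfl hMe hcop
      have e1 : 2 * π * (((N + 1 : ℕ) : ℝ) / N) = 2 * π * (1 / N) + 2 * π := by
        push_cast; field_simp; ring
      rw [e1, Real.cos_add_two_pi] at h1
      have hk : ((N + 1 : ℕ) : ℝ) * e = r.num / 2 + e := by
        push_cast; rw [add_mul, one_mul]; congr 1; rw [hee]; field_simp
      have ha : |(r.num : ℝ) / 2| = 1 / 2 := by rw [abs_div, hxabs]; norm_num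
      have l1 := abs_sub_abs_le_abs_sub ((r.num : ℝ) / 2) (-e)
      rw [abs_neg, sub_neg_eq_add] at l1
      have l2 := abs_add_le ((r.num : ℝ) / 2) e
      have := cos_lt_of_far (r := 1 / N) (f := ((N + 1 : ℕ) : ℝ) * e) hinv0.le
        (by rw [hk]; linarith) (by rw [hk]; linarith)
      linarith
    · have hcop : (N + 2).Coprime (2 * N) := by
        refine Nat.Coprime.mul_right (Nat.coprime_two_right.2 (hod.add_even even_two)) ?_
        simpa using (Nat.coprime_two_left.2 hod)
      have h1 := h (2 * N) (N + 2) (by omega) dvd_rfl hMe hcop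
      have e1 : 2 * π * (((N + 2 : ℕ) : ℝ) / N) = 2 * (2 * π / N) + 2 * π := by
        push_cast; field_simp; ring
      rw [e1, Real.cos_add_two_pi, Real.cos_two_mul] at h1
      have h7 : (7 : ℝ) ≤ N := by
        have : N ≠ 6 := by rintro rfl; exact absurd hod (by decide)
        exact_mod_cast (by omega : 7 ≤ N)
      have hc : 1 / 2 < Real.cos (2 * π / N) := by
        rw [← Real.cos_pi_div_three]
        apply Real.cos_lt_cos_of_nonneg_of_le_pi (by positivity) (by linarith)
        rw [div_lt_div_iff₀ hN0 (by norm_num)]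
        nlinarith
      have h2 : Real.cos (2 * π * (((N + 2 : ℕ) : ℝ) * e)) = -Real.cos (2 * π / N) := by
        have hk : 2 * π * (((N + 2 : ℕ) : ℝ) * e) = r.num * (2 * π / N + π) := by
          push_cast; rw [hee]; field_simp; ring
        rw [hk, ← Real.cos_abs, abs_mul, hxabs, one_mul, Real.cos_abs, Real.cos_add_pi]
      rw [h2] at h1
      nlinarith
  · exfalso
    -- A prime `p` dividing the denominator of `2 N e` allows `k ≡ 1` modulo `N` to move `k e` far from
    -- the integers, while `k / N` stays at `1 / N`.
    obtain ⟨p, hp, y, hy⟩ := Nat.exists_prime_and_dvd hy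
    have hy0 : 0 < y := by
      rcases Nat.eq_zero_or_pos y with h | h
      · rw [h, mul_zero] at hy; exact absurd hy r.den_nz
      · exact h
    have hx : ¬ (p : ℤ) ∣ r.num := by
      intro hd
      have h1 : p ∣ r.num.natAbs := Int.natCast_dvd.1 hd
      have h2 : p ∣ r.den := ⟨y, hy⟩
      exact hp.one_lt.ne' (Nat.eq_one_of_dvd_coprimes r.reduced h1 h2)
    obtain ⟨j, hcop, w, hw1, hw2⟩ := exists_multiplier (L := 2 * N * y) hp
      (by rw [mul_assoc]; exact dvd_mul_right _ _) hx
    have hp0 : (0 : ℝ) < p := by exact_mod_cast hp.pos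
    have hLe : ((2 * N * y : ℕ) : ℝ) * e = r.num / p := by
      rw [← hrd, hre, hy]; push_cast; field_simp
    have h1 := h (p * (2 * N * y)) (1 + j * (2 * N * y))
      (Nat.mul_pos hp.pos (Nat.mul_pos (by omega) hy0))
      (dvd_mul_of_dvd_right (dvd_mul_right _ _) _)
      ⟨r.num, by rw [Nat.cast_mul, mul_assoc, hLe]; field_simp⟩ hcop
    have e1 : 2 * π * (((1 + j * (2 * N * y) : ℕ) : ℝ) / N) =
        2 * π * (1 / N) + ((2 * j * y : ℕ) : ℝ) * (2 * π) := by
      push_cast; field_simp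
    have e2 : 2 * π * (((1 + j * (2 * N * y) : ℕ) : ℝ) * e) =
        2 * π * (e + (j * r.num / p - w)) + (w : ℝ) * (2 * π) := by
      have : ((1 + j * (2 * N * y) : ℕ) : ℝ) * e = e + j * (((2 * N * y : ℕ) : ℝ) * e) := by
        push_cast; ring
      rw [this, hLe]; ring
    rw [e1, e2, Real.cos_add_nat_mul_two_pi, Real.cos_add_int_mul_two_pi] at h1
    set d : ℝ := j * r.num / p - w
    have l1 := abs_sub_abs_le_abs_sub d (-e)
    rw [abs_neg, sub_neg_eq_add, add_comm d e] at l1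
    have l2 := abs_add_le e d
    have := cos_lt_of_far (r := 1 / N) (f := e + d) hinv0.le (by linarith) (by linarith)
    linarith

end

/-- If `N > 5`, `R_N` is tiled by triangles all similar to a triangle whose angles
`α, β, γ` are rational multiples of `π`, and the equation at every vertex of `R_N` is
`α = δ_N` (exactly one tile meets each vertex, with its angle labeled `α` there, and
`α = (N-2)π/N`), then `β = γ = π/N`. -/
theorem statement3 (N : ℕ) (hN : 5 < N)
    (α β γ : ℝ) (hα0 : 0 < α) (hβ0 : 0 < β) (hγ0 : 0 < γ) (hsum : α + β + γ = π)
    (hαq : ∃ q : ℚ, α = q * π) (hβq : ∃ q : ℚ, β = q * π) (hγq : ∃ q : ℚ, γ = q * π)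
    {m : ℕ} (T : Fin m → Fin 3 → Pt) (htile : IsTiling N T)
    (hang : ∀ t, HasAngles (T t) α β γ)
    (hα : α = ngonAngle N)
    (hvert : (∀ j : Fin N,
         countAt (T) 0 (ngonVertex N j) = 1 ∧
         countAt (T) 1 (ngonVertex N j) = 0 ∧
         countAt (T) 2 (ngonVertex N j) = 0)) :
    β = π / N ∧ γ = π / N := by
  have hpi := Real.pi_pos
  have hN0 : (0 : ℝ) < N := by positivity
  have hα' : α = π - 2 * π / N := by rw [hα, ngonAngle]; field_simp
  have hβγ : β + γ = 2 * π / N := by linarith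
  -- `β` and `γ` deviate from `π / N` by `± π e`.
  set e : ℝ := (β - γ) / (2 * π) with he
  have hβe : β = π * (1 / N + e) := by
    have : β = ((β + γ) + (β - γ)) / 2 := by ring
    rw [this, hβγ, he]; field_simp
  have hγe : γ = π * (1 / N - e) := by
    have : γ = ((β + γ) - (β - γ)) / 2 := by ring
    rw [this, hβγ, he]; field_simp
  have heq : ∃ q : ℚ, e = q := by
    obtain ⟨b, hb⟩ := hβq
    obtain ⟨c, hc⟩ := hγq
    refine ⟨(b - c) / 2, ?_⟩
    rw [he, hb, hc]; push_cast; field_simp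
  have helt : |e| < 1 / N := by
    rw [abs_lt]
    constructor
    · have := pos_of_mul_pos_right (hβe ▸ hβ0) hpi.le
      linarith
    · have := pos_of_mul_pos_right (hγe ▸ hγ0) hpi.le
      linarith
  have he0 : e = 0 := by
    refine eq_zero_of_cos_le hN heq helt ?_
    rintro M k hM0 ⟨q, hq⟩ ⟨n, hn⟩ hk
    have hMN : (M : ℝ) * (1 / N) = 2 * q := by rw [hq]; push_cast; field_simp
    have hMβ : M * β = ((2 * q + n : ℤ) : ℝ) * π := by
      push_cast; rw [hβe, ← hMN, ← hn]; ring
    have hMγ : M * γ = ((2 * q - n : ℤ) : ℝ) * π := by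
      push_cast; rw [hγe, ← hMN, ← hn]; ring
    have hMα : M * α = ((M - 4 * q : ℤ) : ℝ) * π := by
      have : α = π - β - γ := by linarith
      rw [this, mul_sub, mul_sub, hMβ, hMγ]; push_cast; ring
    have key := plane_tiling (by omega) T htile hα0 hβ0 hγ0 hsum hang hM0 ⟨q, hq⟩ hk
      ⟨_, hMα⟩ ⟨_, hMβ⟩ ⟨_, hMγ⟩
    have hkM : k.Coprime (2 * N) := hk.coprime_dvd_right ⟨q, hq⟩
    have hkodd : Odd k := Nat.coprime_two_right.1 (hkM.coprime_dvd_right (dvd_mul_right 2 N))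
    have hsinα : Real.sin (k * α) = Real.sin (2 * π / N * k) := by
      obtain ⟨l, hl⟩ := hkodd
      have : (k : ℝ) * α = π - 2 * π / N * k + (l : ℝ) * (2 * π) := by
        have hkl : (k : ℝ) = 2 * l + 1 := by exact_mod_cast hl
        rw [hα']; linear_combination π * hkl
      rw [this, Real.sin_add_nat_mul_two_pi, Real.sin_pi_sub]
    have hs : Real.sin (2 * π / N * k) ≠ 0 := by
      intro h0
      obtain ⟨l, hl⟩ := Real.sin_eq_zero_iff.1 h0
      have h1 : (l : ℝ) * N = 2 * k := by
        have h2 : ((l : ℝ) * N) * π = (2 * k) * π := by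
          rw [mul_right_comm, hl]; field_simp
        exact mul_right_cancel₀ hpi.ne' h2
      have h3 : l * N = 2 * k := by exact_mod_cast h1
      have h4 : N ∣ 2 * k := by
        rw [← Int.natCast_dvd_natCast]; exact ⟨l, by push_cast; rw [← h3]; ring⟩
      have h5 : N ∣ 2 :=
        (hkM.coprime_dvd_right (dvd_mul_left N 2)).symm.dvd_of_dvd_mul_right h4
      exact absurd (Nat.le_of_dvd (by norm_num) h5) (by omega)
    rw [hsinα] at key
    have hprod : 0 ≤ Real.sin (k * β) * Real.sin (k * γ) := by
      have h1 : 0 ≤ Real.sin (2 * π / N * k) ^ 2 * (Real.sin (k * β) * Real.sin (k * γ)) := by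
        linarith
      exact nonneg_of_mul_nonneg_right h1 (by positivity)
    -- `2 sin kβ sin kγ = cos k(β - γ) - cos k(β + γ)`
    have h2 := Real.two_mul_sin_mul_sin (k * β) (k * γ)
    have e1 : (k : ℝ) * β - k * γ = 2 * π * (k * e) := by rw [hβe, hγe]; ring
    have e2 : (k : ℝ) * β + k * γ = 2 * π * (k / N) := by rw [hβe, hγe]; field_simp; ring
    rw [e1, e2] at h2
    linarith
  rw [hβe, hγe, he0]
  constructor <;> ring

end
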